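/- Let u : D_r ⊂ ℝ² → ℝᵐ be smooth with |Du| ≤ α and |D²u| ≤ β. Then for every k ≥ 0 there is C = C(r, α, β, k) such that ‖D²u‖_{W^{k,2}(D_r)} ≤ C Σ_{s=1}^{max(k,1)} ‖A‖^s_{H^{k,2}}, where A is the second fundamental form of the graph of u. In particular, for k = 0, ‖D²u‖_{L²} ≤ C₀‖A‖_{L²}. -/

import Mathlib

noncomputable section Stmt18

namespace Stmt18

variable {m : ℕ}

/-- Partial derivative of a map into the ambient ℝ^{2+m} ≅ ℝ² ⊕ ℝᵐ. -/
def pd (f : (Fin 2 → ℝ) → (Fin 2 ⊕ Fin m → ℝ)) (i : Fin 2) :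
    (Fin 2 → ℝ) → (Fin 2 ⊕ Fin m → ℝ) :=
  fun x => fderiv ℝ f x (Pi.single i 1)

def dotA (v w : Fin 2 ⊕ Fin m → ℝ) : ℝ := ∑ A, v A * w A

/-- The graph immersion F(x) = (x, u(x)). -/
def gr (u : (Fin 2 → ℝ) → (Fin m → ℝ)) : (Fin 2 → ℝ) → (Fin 2 ⊕ Fin m → ℝ) :=
  fun x => Sum.elim x (u x)

def gmet (F : (Fin 2 → ℝ) → (Fin 2 ⊕ Fin m → ℝ)) (x : Fin 2 → ℝ) :
    Matrix (Fin 2) (Fin 2) ℝ :=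
  Matrix.of fun i j => dotA (pd F i x) (pd F j x)

def nproj (F : (Fin 2 → ℝ) → (Fin 2 ⊕ Fin m → ℝ)) (x : Fin 2 → ℝ)
    (v : Fin 2 ⊕ Fin m → ℝ) : Fin 2 ⊕ Fin m → ℝ :=
  v - ∑ k, ∑ l, ((gmet F x)⁻¹ k l * dotA v (pd F l x)) • pd F k x

def chr (F : (Fin 2 → ℝ) → (Fin 2 ⊕ Fin m → ℝ)) (i j k : Fin 2)
    (x : Fin 2 → ℝ) : ℝ :=
  ∑ l, (gmet F x)⁻¹ k l * dotA (pd (pd F i) j x) (pd F l x)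

def sffT (F : (Fin 2 → ℝ) → (Fin 2 ⊕ Fin m → ℝ)) :
    (Fin 2 → ℝ) → (Fin 2 → Fin 2) → (Fin 2 ⊕ Fin m → ℝ) :=
  fun x I => nproj F x (pd (pd F (I 0)) (I 1) x)

def covDer (F : (Fin 2 → ℝ) → (Fin 2 ⊕ Fin m → ℝ)) (l : ℕ)
    (T : (Fin 2 → ℝ) → (Fin l → Fin 2) → (Fin 2 ⊕ Fin m → ℝ)) :
    (Fin 2 → ℝ) → (Fin (l+1) → Fin 2) → (Fin 2 ⊕ Fin m → ℝ) :=
  fun x I =>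
    nproj F x (pd (fun y => T y (Fin.tail I)) (I 0) x)
      - ∑ a : Fin l, ∑ mm : Fin 2,
          chr F (I 0) (Fin.tail I a) mm x • T x (Function.update (Fin.tail I) a mm)

/-- Iterated covariant derivative ∇ˡA. -/
def covIter (F : (Fin 2 → ℝ) → (Fin 2 ⊕ Fin m → ℝ)) :
    (l : ℕ) → (Fin 2 → ℝ) → (Fin (l+2) → Fin 2) → (Fin 2 ⊕ Fin m → ℝ)
  | 0 => sffT F
  | (l+1) => covDer F (l+2) (covIter F l)

/-- Pointwise squared g-norm `|∇ˡA|²_g`. -/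
def nCov2 (F : (Fin 2 → ℝ) → (Fin 2 ⊕ Fin m → ℝ)) (l : ℕ) (x : Fin 2 → ℝ) : ℝ :=
  ∑ I : Fin (l+2) → Fin 2, ∑ J : Fin (l+2) → Fin 2,
    (∏ s, (gmet F x)⁻¹ (I s) (J s)) * dotA (covIter F l x I) (covIter F l x J)

/-- Iterated partial derivatives Dˡu. -/
def pdIter (u : (Fin 2 → ℝ) → (Fin m → ℝ)) :
    (l : ℕ) → (Fin 2 → ℝ) → (Fin l → Fin 2) → (Fin m → ℝ)
  | 0 => fun x _ => u x
  | (l+1) => fun x I =>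
      fderiv ℝ (fun y => pdIter u l y (Fin.tail I)) x (Pi.single (I 0) 1)

/-- The open disk of radius r in ℝ². -/
def Dr (r : ℝ) : Set (Fin 2 → ℝ) := {x | x 0 ^ 2 + x 1 ^ 2 < r ^ 2}

/-- The Sobolev norm `‖A‖_{H^{k,2}}` of the second fundamental form of the graph. -/
def HAnorm (r : ℝ) (k : ℕ) (u : (Fin 2 → ℝ) → (Fin m → ℝ)) : ℝ :=
  Real.sqrt (∑ l ∈ Finset.range (k+1),
    ∫ x in Dr r, nCov2 (gr u) l x * Real.sqrt (gmet (gr u) x).det)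

/-- The usual Sobolev norm `‖D²u‖_{W^{k,2}}` of the Hessian on the disk. -/
def Wnorm (r : ℝ) (k : ℕ) (u : (Fin 2 → ℝ) → (Fin m → ℝ)) : ℝ :=
  Real.sqrt (∑ l ∈ Finset.range (k+1),
    ∫ x in Dr r, ∑ I : Fin (l+2) → Fin 2, ∑ a, (pdIter u (l+2) x I a) ^ 2)

end Stmt18

/-!
The covariant derivative `∇ˡA` is the normal part of `D^{l+2}u` plus a remainder: a polynomial in
the derivatives of `u` of order at least two, with coefficients depending on `Du`, in which every
term has weight `l + 2` and at least two factors (a factor `D^{j+2}u` has weight `j + 1`). The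
gradient bound makes the normal part comparable to `D^{l+2}u`.

The remainder is absorbed by scale-adapted interpolation. At each point `x` of the disk there are an
amplitude `A` and a length `h ≤ s` with `|D^j(D²u)(x)| ≤ K A / h^j` for `j ≤ n`, where `A ≤ 2β` and
`A / h^n` is bounded by `s` times an average of `|D^{n+1}(D²u)| + s^{-(n+1)} |D²u|` over finitely
many segments inside the disk. Having two factors, the remainder of weight `n + 2` is at most
`C (A h)² / h^{n+2} ≤ C β A / h^n`, so its `L²` norm is `O(s)` times that of `D^{n+3}u`, up to lower
order. For `s` small this is absorbed on the disks of radius `ρ < r`, where all integrals are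
finite, and then `ρ` increases to `r`.
-/

namespace Stmt18

open MeasureTheory Set
open scoped ContDiff

section OneVariable

variable {E : Type*} [NormedAddCommGroup E] [NormedSpace ℝ E]

lemma exists_norm_le_mul_sum_norm_vandermonde {n : ℕ} (t : Fin n → ℝ)
    (ht : Function.Injective t) :
    ∃ C > (0 : ℝ), ∀ (a : Fin n → E) (i : Fin n),
      ‖a i‖ ≤ C * ∑ k, ‖∑ j : Fin n, t k ^ (j : ℕ) • a j‖ := by
  set V := Matrix.vandermonde t with hVdef
  have hV : IsUnit V.det := isUnit_iff_ne_zero.mpr (Matrix.det_vandermonde_ne_zero_iff.mpr ht)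
  refine ⟨1 + ∑ i, ∑ k, |V⁻¹ i k|, by positivity, fun a i => ?_⟩
  have hinv : a i = ∑ k, V⁻¹ i k • ∑ j : Fin n, t k ^ (j : ℕ) • a j := by
    calc a i = ∑ j, (V⁻¹ * V) i j • a j := by
          simp [Matrix.nonsing_inv_mul _ hV, Matrix.one_apply, ite_smul]
      _ = _ := by
          simp only [Matrix.mul_apply, Finset.sum_smul, Finset.smul_sum, mul_smul, hVdef,
            Matrix.vandermonde_apply]
          exact Finset.sum_comm
  rw [hinv, Finset.mul_sum]
  refine (norm_sum_le _ _).trans (Finset.sum_le_sum fun k _ => ?_)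
  rw [norm_smul, Real.norm_eq_abs]
  have hentry : |V⁻¹ i k| ≤ ∑ i, ∑ k, |V⁻¹ i k| :=
    (Finset.single_le_sum (f := fun k => |V⁻¹ i k|) (fun _ _ => abs_nonneg _)
      (Finset.mem_univ k)).trans
    (Finset.single_le_sum (f := fun i => ∑ k, |V⁻¹ i k|)
      (fun _ _ => Finset.sum_nonneg fun _ _ => abs_nonneg _) (Finset.mem_univ i))
  gcongr
  linarith

/-- The functions `φ j` on a neighbourhood of `[0, S]` are the successive derivatives of `φ 0`. -/
def IsDerivChain (φ : ℕ → ℝ → E) (S : ℝ) : Prop :=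
  ∀ j, ∀ τ ∈ Icc 0 S, HasDerivAt (φ j) (φ (j + 1) τ) τ

namespace IsDerivChain

variable {φ : ℕ → ℝ → E} {S : ℝ}

lemma hasDerivAt_taylor (h : IsDerivChain φ S) (n : ℕ) {τ : ℝ} (hτ : τ ∈ Icc 0 S) :
    HasDerivAt
      (fun τ => φ 0 τ - ∑ i ∈ Finset.range (n + 2), (τ ^ i / (i.factorial : ℝ)) • φ i 0)
      (φ 1 τ - ∑ i ∈ Finset.range (n + 1), (τ ^ i / (i.factorial : ℝ)) • φ (i + 1) 0) τ := by
  refine (h 0 τ hτ).sub ?_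
  have hterm : ∀ i ∈ Finset.range (n + 2),
      HasDerivAt (fun τ : ℝ => (τ ^ i / (i.factorial : ℝ)) • φ i 0)
        ((i * τ ^ (i - 1) / (i.factorial : ℝ)) • φ i 0) τ := fun i _ =>
    ((hasDerivAt_pow i τ).div_const _).smul_const _
  convert HasDerivAt.fun_sum hterm using 1
  rw [Finset.sum_range_succ' _ (n + 1)]
  simp only [Nat.cast_zero, zero_mul, zero_div, zero_smul, add_zero]
  refine Finset.sum_congr rfl fun i _ => ?_
  rw [Nat.factorial_succ]
  congr 1
  push_cast
  field_simp

/-- Only the oscillation of the `n`-th derivative enters the remainder, not a bound on the next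
one: this is what later allows a remainder controlled by an integral. -/
lemma norm_sub_taylor_le {n : ℕ} : ∀ {φ : ℕ → ℝ → E} {G : ℝ}, IsDerivChain φ S →
    (∀ τ ∈ Icc 0 S, ‖φ n τ - φ n 0‖ ≤ G) → ∀ τ ∈ Icc 0 S,
    ‖φ 0 τ - ∑ i ∈ Finset.range (n + 1), (τ ^ i / (i.factorial : ℝ)) • φ i 0‖ ≤ τ ^ n * G := by
  induction n with
  | zero => intro φ G _ hG τ hτ; simpa using hG τ hτ
  | succ n ih =>
    intro φ G h hG T hT
    have hG0 : 0 ≤ G := (norm_nonneg _).trans (hG T hT)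
    have hsub : Icc 0 T ⊆ Icc 0 S := Icc_subset_Icc_right hT.2
    have hbound : ∀ τ ∈ Icc 0 T, ‖φ 1 τ - ∑ i ∈ Finset.range (n + 1),
        (τ ^ i / (i.factorial : ℝ)) • φ (i + 1) 0‖ ≤ T ^ n * G := fun τ hτ =>
      (ih (φ := fun j => φ (j + 1)) (fun j => h (j + 1)) hG τ (hsub hτ)).trans
        (mul_le_mul_of_nonneg_right (pow_le_pow_left₀ hτ.1 hτ.2 n) hG0)
    have hmean := (convex_Icc 0 T).norm_image_sub_le_of_norm_hasDerivWithin_le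
      (fun τ hτ => (h.hasDerivAt_taylor n (hsub hτ)).hasDerivWithinAt) hbound
      (left_mem_Icc.mpr hT.1) (right_mem_Icc.mpr hT.1)
    have hzero : φ 0 0 - ∑ i ∈ Finset.range (n + 2), ((0 : ℝ) ^ i / (i.factorial : ℝ)) • φ i 0
        = 0 := by
      rw [Finset.sum_range_succ']; simp
    rw [hzero, sub_zero, sub_zero, Real.norm_of_nonneg hT.1] at hmean
    exact hmean.trans_eq (by ring)

end IsDerivChain

/-- The nodes `1/(n+1), …, 1` at which a Taylor polynomial is sampled. They stay away from `0`, so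
that averaging a function over `h ↦ h * taylorNode n k` costs only a factor `n + 1`. -/
def taylorNode (n : ℕ) (k : Fin (n + 1)) : ℝ := ((k : ℕ) + 1 : ℝ) / (n + 1)

lemma taylorNode_pos (n : ℕ) (k : Fin (n + 1)) : 0 < taylorNode n k := by
  unfold taylorNode; positivity

lemma taylorNode_le_one (n : ℕ) (k : Fin (n + 1)) : taylorNode n k ≤ 1 := by
  rw [taylorNode, div_le_one (by positivity)]
  exact_mod_cast k.2

lemma inv_taylorNode_le (n : ℕ) (k : Fin (n + 1)) : (taylorNode n k)⁻¹ ≤ n + 1 := by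
  rw [taylorNode, inv_div]
  exact div_le_self (by positivity) (by linarith [(k : ℕ).cast_nonneg (α := ℝ)])

lemma taylorNode_injective (n : ℕ) : Function.Injective (taylorNode n) := by
  intro a b h
  have h' : ((a : ℕ) : ℝ) + 1 = (b : ℕ) + 1 := (div_left_inj' (by positivity)).mp h
  exact Fin.ext (by exact_mod_cast add_right_cancel h')

lemma mul_taylorNode_mem_Icc {S h : ℝ} (hh : h ∈ Icc 0 S) (n : ℕ) (k : Fin (n + 1)) :
    h * taylorNode n k ∈ Icc 0 S :=
  ⟨mul_nonneg hh.1 (taylorNode_pos n k).le,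
    (mul_le_of_le_one_right hh.1 (taylorNode_le_one n k)).trans hh.2⟩

variable (E) in
lemma exists_norm_mul_pow_le_sum_taylorNode (n : ℕ) :
    ∃ C > (0 : ℝ), ∀ (φ : ℕ → ℝ → E) (S G : ℝ), IsDerivChain φ S →
      (∀ τ ∈ Icc 0 S, ‖φ n τ - φ n 0‖ ≤ G) → ∀ h ∈ Icc 0 S, ∀ j ≤ n,
      ‖φ j 0‖ * h ^ j ≤ C * ∑ k, (‖φ 0 (h * taylorNode n k)‖ + h ^ n * G) := by
  obtain ⟨C, hC, hV⟩ := exists_norm_le_mul_sum_norm_vandermonde (E := E) (taylorNode n)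
    (taylorNode_injective n)
  refine ⟨n.factorial * C, by positivity, fun φ S G hφ hG h hh j hj => ?_⟩
  have hG0 : 0 ≤ G := (norm_nonneg _).trans (hG h hh)
  have h0 : 0 ≤ h := hh.1
  have hsample : ∀ k, ‖∑ i : Fin (n + 1), taylorNode n k ^ (i : ℕ) •
      (h ^ (i : ℕ) / ((i : ℕ).factorial : ℝ)) • φ i 0‖
      ≤ ‖φ 0 (h * taylorNode n k)‖ + h ^ n * G := by
    intro k
    have htaylor := hφ.norm_sub_taylor_le hG _ (mul_taylorNode_mem_Icc hh n k)
    have hpow : (h * taylorNode n k) ^ n * G ≤ h ^ n * G := by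
      gcongr
      · exact mul_nonneg h0 (taylorNode_pos n k).le
      · exact mul_le_of_le_one_right h0 (taylorNode_le_one n k)
    have hsum : ∑ i ∈ Finset.range (n + 1),
        ((h * taylorNode n k) ^ i / (i.factorial : ℝ)) • φ i 0 = ∑ i : Fin (n + 1),
        taylorNode n k ^ (i : ℕ) • (h ^ (i : ℕ) / ((i : ℕ).factorial : ℝ)) • φ i 0 := by
      rw [Finset.sum_range]
      exact Finset.sum_congr rfl fun i _ => by rw [smul_smul, mul_pow]; congr 1; ring
    rw [hsum, norm_sub_rev] at htaylor
    linarith [norm_le_norm_add_norm_sub' (∑ i : Fin (n + 1), taylorNode n k ^ (i : ℕ) •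
      (h ^ (i : ℕ) / ((i : ℕ).factorial : ℝ)) • φ i 0) (φ 0 (h * taylorNode n k))]
  have hcoeff := hV (fun i => (h ^ (i : ℕ) / ((i : ℕ).factorial : ℝ)) • φ i 0) ⟨j, by omega⟩
  rw [norm_smul, Real.norm_of_nonneg (by positivity)] at hcoeff
  have hfac : (j.factorial : ℝ) ≤ n.factorial := by exact_mod_cast Nat.factorial_le hj
  calc ‖φ j 0‖ * h ^ j = j.factorial * (h ^ j / j.factorial * ‖φ j 0‖) := by field_simp
    _ ≤ n.factorial * (C * ∑ k, (‖φ 0 (h * taylorNode n k)‖ + h ^ n * G)) := by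
        refine mul_le_mul hfac (hcoeff.trans ?_) (by positivity) (by positivity)
        gcongr with k _
        exact hsample k
    _ = _ := by ring

lemma integral_comp_mul_taylorNode_le {g : ℝ → ℝ} {S : ℝ} (hS : 0 ≤ S) (hg : ∀ τ, 0 ≤ g τ)
    (hc : ContinuousOn g (Icc 0 S)) (n : ℕ) (k : Fin (n + 1)) :
    ∫ h in 0..S, g (h * taylorNode n k) ≤ (n + 1) * ∫ h in 0..S, g h := by
  have hend := mul_taylorNode_mem_Icc (right_mem_Icc.mpr hS) n k
  rw [intervalIntegral.integral_comp_mul_right g (taylorNode_pos n k).ne', zero_mul, smul_eq_mul]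
  gcongr
  · exact intervalIntegral.integral_nonneg hend.1 fun _ _ => hg _
  · exact inv_taylorNode_le n k
  · exact intervalIntegral.integral_mono_interval le_rfl hend.1 hend.2
      (Filter.Eventually.of_forall hg) (hc.intervalIntegrable_of_Icc hS)

variable (E) in
lemma exists_norm_le_integral_add_osc (n : ℕ) :
    ∃ C > (0 : ℝ), ∀ (φ : ℕ → ℝ → E) (S G : ℝ), 0 < S → IsDerivChain φ S →
      (∀ τ ∈ Icc 0 S, ‖φ n τ - φ n 0‖ ≤ G) →
      ‖φ 0 0‖ ≤ C * ((∫ τ in 0..S, ‖φ 0 τ‖) / S + S ^ n * G) := by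
  obtain ⟨C, hC, hnode⟩ := exists_norm_mul_pow_le_sum_taylorNode E n
  refine ⟨C * (n + 1) ^ 2, by positivity, fun φ S G hS hφ hG => ?_⟩
  have hG0 : 0 ≤ G := (norm_nonneg _).trans (hG S ⟨hS.le, le_rfl⟩)
  have hcont : ContinuousOn (fun τ => ‖φ 0 τ‖) (Icc 0 S) := fun τ hτ =>
    (hφ 0 τ hτ).continuousAt.norm.continuousWithinAt
  have hint : ∀ k, IntervalIntegrable (fun h => ‖φ 0 (h * taylorNode n k)‖) volume 0 S := fun k =>
    (hcont.comp (by fun_prop) fun h hh =>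
      mul_taylorNode_mem_Icc hh n k).intervalIntegrable_of_Icc hS.le
  set F := ∫ τ in 0..S, ‖φ 0 τ‖
  have haverage : S * ‖φ 0 0‖ ≤
      ∫ h in 0..S, C * ∑ k, (‖φ 0 (h * taylorNode n k)‖ + S ^ n * G) := by
    rw [← sub_zero S, ← smul_eq_mul, ← intervalIntegral.integral_const, sub_zero]
    have hsum : IntervalIntegrable
        (fun h => ∑ k, (‖φ 0 (h * taylorNode n k)‖ + S ^ n * G)) volume 0 S := by
      simpa only [Finset.sum_fn] using IntervalIntegrable.sum Finset.univ fun k _ =>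
        (hint k).add (intervalIntegrable_const (c := S ^ n * G))
    refine intervalIntegral.integral_mono_on hS.le (by simp) (hsum.const_mul C) fun h hh => ?_
    have hpow := pow_le_pow_left₀ hh.1 hh.2 n
    have hzero := hnode φ S G hφ hG h hh 0 n.zero_le
    rw [pow_zero, mul_one] at hzero
    exact hzero.trans (by gcongr)
  have hterm : ∀ k, ∫ h in 0..S, (‖φ 0 (h * taylorNode n k)‖ + S ^ n * G) ≤
      (n + 1) * (F + S * (S ^ n * G)) := fun k => by
    have hsample := integral_comp_mul_taylorNode_le hS.le (fun _ => norm_nonneg _) hcont n k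
    rw [intervalIntegral.integral_add (hint k) (by simp), intervalIntegral.integral_const,
      smul_eq_mul, sub_zero, mul_add]
    have hrem : 0 ≤ S * (S ^ n * G) := by positivity
    exact add_le_add hsample (le_mul_of_one_le_left hrem (le_add_of_nonneg_left n.cast_nonneg))
  rw [intervalIntegral.integral_const_mul, intervalIntegral.integral_finsetSum
    fun k _ => (hint k).add (by simp)] at haverage
  have htotal : S * ‖φ 0 0‖ ≤ C * ((n + 1) * ((n + 1) * (F + S * (S ^ n * G)))) := by
    refine haverage.trans ?_
    gcongr
    exact (Finset.sum_le_sum fun k _ => hterm k).trans_eq (by simp)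
  rw [← mul_le_mul_iff_right₀ hS]
  exact htotal.trans_eq (by field_simp)

namespace IsDerivChain

variable {φ : ℕ → ℝ → E} {S : ℝ}

lemma continuousOn (h : IsDerivChain φ S) (j : ℕ) : ContinuousOn (φ j) (Icc 0 S) := fun τ hτ =>
  (h j τ hτ).continuousAt.continuousWithinAt

lemma comp_const_add (h : IsDerivChain φ S) {a T : ℝ} (ha : 0 ≤ a) (haT : a + T ≤ S) :
    IsDerivChain (fun j τ => φ j (a + τ)) T := fun j τ hτ => by
  simpa using (h j (a + τ) ⟨by linarith [hτ.1], by linarith [hτ.2]⟩).comp_const_add a τ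

lemma integral_norm_mono (h : IsDerivChain φ S) (j : ℕ) {a b : ℝ} (ha : 0 ≤ a) (hab : a ≤ b)
    (hb : b ≤ S) : ∫ τ in a..b, ‖φ j τ‖ ≤ ∫ τ in 0..S, ‖φ j τ‖ :=
  intervalIntegral.integral_mono_interval ha hab hb
    (Filter.Eventually.of_forall fun _ => norm_nonneg _)
    ((h.continuousOn j).norm.intervalIntegrable_of_Icc (ha.trans (hab.trans hb)))

lemma norm_sub_le_integral [CompleteSpace E] (h : IsDerivChain φ S) (j : ℕ) {a b : ℝ}
    (ha : 0 ≤ a) (hab : a ≤ b) (hb : b ≤ S) :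
    ‖φ j b - φ j a‖ ≤ ∫ τ in 0..S, ‖φ (j + 1) τ‖ := by
  have hsub : Icc a b ⊆ Icc 0 S := Icc_subset_Icc ha hb
  rw [← intervalIntegral.integral_eq_sub_of_hasDerivAt
    (fun τ hτ => h j τ (hsub (by rwa [uIcc_of_le hab] at hτ)))
    (((h.continuousOn (j + 1)).mono hsub).intervalIntegrable_of_Icc hab)]
  exact (intervalIntegral.norm_integral_le_integral_norm hab).trans
    (h.integral_norm_mono (j + 1) ha hab hb)

variable (E) [CompleteSpace E]

lemma exists_norm_le_integral (n : ℕ) :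
    ∃ C > (0 : ℝ), ∀ (φ : ℕ → ℝ → E) (s : ℝ), 0 < s → IsDerivChain φ (2 * s) →
      ∀ τ ∈ Icc 0 s, ‖φ 0 τ‖ ≤
        C * ((∫ τ in 0..2 * s, ‖φ 0 τ‖) / s + s ^ n * ∫ τ in 0..2 * s, ‖φ (n + 1) τ‖) := by
  obtain ⟨C, hC, hsup⟩ := exists_norm_le_integral_add_osc E n
  refine ⟨C, hC, fun φ s hs hφ a ha => ?_⟩
  have hshift := hsup _ s _ hs (hφ.comp_const_add ha.1 (by linarith [ha.2])) fun τ hτ => by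
    simpa using hφ.norm_sub_le_integral n (a := a) (b := a + τ) ha.1 (by linarith [hτ.1])
      (by linarith [ha.2, hτ.2])
  rw [intervalIntegral.integral_comp_add_left (fun t => ‖φ 0 t‖), add_zero] at hshift
  refine hshift.trans ?_
  gcongr
  exact hφ.integral_norm_mono 0 (by linarith [ha.1]) (by linarith) (by linarith [ha.2])

lemma exists_norm_mul_pow_le (n : ℕ) :
    ∃ C > (0 : ℝ), ∀ (φ : ℕ → ℝ → E) (S A h : ℝ), IsDerivChain φ S → h ∈ Icc 0 S →
      (∀ τ ∈ Icc 0 h, ‖φ 0 τ‖ ≤ A) → ∀ j ≤ n,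
        ‖φ j 0‖ * h ^ j ≤ C * (A + h ^ n * ∫ τ in 0..S, ‖φ (n + 1) τ‖) := by
  obtain ⟨C, hC, hnode⟩ := exists_norm_mul_pow_le_sum_taylorNode E n
  refine ⟨C * (n + 1), by positivity, fun φ S A h hφ hh hA j hj => ?_⟩
  have hsample := hnode φ S _ hφ (fun τ hτ => hφ.norm_sub_le_integral n le_rfl hτ.1 hτ.2) h hh j hj
  calc ‖φ j 0‖ * h ^ j ≤ _ := hsample
    _ ≤ C * ∑ _k : Fin (n + 1), (A + h ^ n * ∫ τ in 0..S, ‖φ (n + 1) τ‖) := by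
        gcongr with k _
        exact hA _ (mul_taylorNode_mem_Icc ⟨hh.1, le_rfl⟩ n k)
    _ = _ := by simp; ring

end IsDerivChain

/-- Balances `A` against `h ^ n * G`: `h` is `(A / G) ^ (1 / n)`, cut off at `s`. -/
lemma exists_balancing_scale (n : ℕ) {A G s : ℝ} (hs : 0 < s) (hA : 0 ≤ A) (hG : 0 ≤ G)
    (hAG : A = 0 → G = 0) :
    ∃ h, 0 < h ∧ h ≤ s ∧ (n ≠ 0 → h ^ n * G ≤ A) ∧ A / h ^ n ≤ A / s ^ n + G := by
  rcases eq_or_ne n 0 with rfl | hn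
  · exact ⟨s, hs, le_rfl, fun h => absurd rfl h, by linarith⟩
  rcases le_or_gt (s ^ n * G) A with hle | hlt
  · exact ⟨s, hs, le_rfl, fun _ => hle, by linarith⟩
  have hG' : 0 < G := hG.lt_of_ne' fun h => by simp [h] at hlt; linarith
  have hA' : 0 < A := hA.lt_of_ne' fun h => hG'.ne' (hAG h)
  have hroot : ((A / G) ^ ((n : ℝ)⁻¹)) ^ n = A / G := Real.rpow_inv_natCast_pow (by positivity) hn
  refine ⟨(A / G) ^ ((n : ℝ)⁻¹), by positivity, ?_, fun _ => ?_, ?_⟩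
  · refine le_of_pow_le_pow_left₀ hn hs.le ?_
    rw [hroot, div_le_iff₀ hG']
    exact hlt.le
  · rw [hroot, div_mul_cancel₀ _ hG'.ne']
  · rw [hroot, div_div_cancel₀ hA'.ne']
    exact le_add_of_nonneg_left (by positivity)

end OneVariable

section Symmetry

variable {V E : Type*} [NormedAddCommGroup V] [NormedSpace ℝ V] [NormedAddCommGroup E]
  [NormedSpace ℝ E] {f : V → E} {x : V}

lemma iteratedFDeriv_succ_apply_of_contDiffAt {n : ℕ} (hf : ContDiffAt ℝ (n + 1) f x)
    (v : Fin (n + 1) → V) :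
    iteratedFDeriv ℝ (n + 1) f x v =
      fderiv ℝ (fun y => iteratedFDeriv ℝ n f y (Fin.tail v)) x (v 0) :=
  DifferentiableAt.iteratedFDeriv_succ_apply_left' <|
    (hf.iteratedFDeriv_right (m := 1) (i := n) (by rw [add_comm])).differentiableAt one_ne_zero

lemma contDiffAt_iteratedFDeriv_apply {n j : ℕ} (hf : ContDiffAt ℝ (j + n : ℕ) f x)
    (w : Fin n → V) : ContDiffAt ℝ j (fun y => iteratedFDeriv ℝ n f y w) x :=
  (ContinuousMultilinearMap.apply ℝ (fun _ : Fin n => V) E w).contDiff.contDiffAt.comp x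
    (hf.iteratedFDeriv_right (m := j) (i := n) (by norm_cast))

lemma iteratedFDeriv_add_two_apply {n : ℕ} (hf : ContDiffAt ℝ (n + 2 : ℕ) f x)
    (v : Fin (n + 2) → V) :
    iteratedFDeriv ℝ (n + 2) f x v =
      fderiv ℝ (fderiv ℝ fun y => iteratedFDeriv ℝ n f y (Fin.tail (Fin.tail v)))
        x (v 0) (v 1) := by
  set g : V → E := fun y => iteratedFDeriv ℝ n f y (Fin.tail (Fin.tail v))
  have hg : ContDiffAt ℝ 2 g x := contDiffAt_iteratedFDeriv_apply (by rwa [add_comm]) _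
  have hnear : (fun y => iteratedFDeriv ℝ (n + 1) f y (Fin.tail v)) =ᶠ[nhds x]
      fun y => fderiv ℝ g y (v 1) := by
    filter_upwards [hf.eventually (ENat.natCast_ne_coe_top _)] with y hy
    exact iteratedFDeriv_succ_apply_of_contDiffAt
      (hy.of_le (by norm_cast; omega)) (Fin.tail v)
  rw [iteratedFDeriv_succ_apply_of_contDiffAt (by exact_mod_cast hf), hnear.fderiv_eq,
    fderiv_clm_apply ((hg.fderiv_right (m := 1) le_rfl).differentiableAt one_ne_zero)
      (differentiableAt_const _)]
  simp

lemma iteratedFDeriv_comp_swap_castSucc_succ {n : ℕ} (hf : ContDiffAt ℝ (n + 1 : ℕ) f x)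
    (i : Fin n) (v : Fin (n + 1) → V) :
    iteratedFDeriv ℝ (n + 1) f x (v ∘ Equiv.swap i.castSucc i.succ) =
      iteratedFDeriv ℝ (n + 1) f x v := by
  induction n generalizing x with
  | zero => exact i.elim0
  | succ n ih =>
    induction i using Fin.cases with
    | zero =>
      have hg : ContDiffAt ℝ 2 (fun y => iteratedFDeriv ℝ n f y (Fin.tail (Fin.tail v))) x :=
        contDiffAt_iteratedFDeriv_apply (by rwa [add_comm]) _
      have htail : Fin.tail (Fin.tail (v ∘ Equiv.swap (Fin.castSucc 0) (Fin.succ 0))) =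
          Fin.tail (Fin.tail v) := by
        funext k
        have h0 : k.succ.succ ≠ Fin.castSucc 0 := Fin.succ_ne_zero _
        have h1 : k.succ.succ ≠ Fin.succ 0 := (Fin.succ_injective _).ne (Fin.succ_ne_zero k)
        simp only [Fin.tail, Function.comp_apply, Equiv.swap_apply_of_ne_of_ne h0 h1]
      rw [iteratedFDeriv_add_two_apply hf, iteratedFDeriv_add_two_apply hf, htail,
        (hg.isSymmSndFDerivAt (by simp)).eq]
      simp
    | succ i =>
      have htail : Fin.tail (v ∘ Equiv.swap i.succ.castSucc i.succ.succ) =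
          Fin.tail v ∘ Equiv.swap i.castSucc i.succ := by
        funext k
        simp only [Fin.tail, Function.comp_apply, Fin.castSucc_succ,
          (Fin.succ_injective _).swap_apply]
      have hnear : (fun y => iteratedFDeriv ℝ (n + 1) f y
            (Fin.tail v ∘ Equiv.swap i.castSucc i.succ)) =ᶠ[nhds x]
          fun y => iteratedFDeriv ℝ (n + 1) f y (Fin.tail v) := by
        filter_upwards [hf.eventually (ENat.natCast_ne_coe_top _)] with y hy
        exact ih (hy.of_le (by norm_cast; omega)) _ _
      rw [iteratedFDeriv_succ_apply_of_contDiffAt (by exact_mod_cast hf),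
        iteratedFDeriv_succ_apply_of_contDiffAt (by exact_mod_cast hf), htail, hnear.fderiv_eq,
        Function.comp_apply, Fin.castSucc_succ,
        Equiv.swap_apply_of_ne_of_ne (Fin.succ_ne_zero _).symm (Fin.succ_ne_zero _).symm]

theorem iteratedFDeriv_comp_perm {n : ℕ} (hf : ContDiffAt ℝ n f x) (v : Fin n → V)
    (σ : Equiv.Perm (Fin n)) : iteratedFDeriv ℝ n f x (v ∘ σ) = iteratedFDeriv ℝ n f x v := by
  cases n with
  | zero => rw [Subsingleton.elim (v ∘ σ) v]
  | succ n =>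
    have hmem : σ ∈ Submonoid.closure (range fun i : Fin n => Equiv.swap i.castSucc i.succ) := by
      rw [Equiv.Perm.mclosure_swap_castSucc_succ]; trivial
    induction hmem using Submonoid.closure_induction generalizing v with
    | mem τ hτ => obtain ⟨i, rfl⟩ := hτ; exact iteratedFDeriv_comp_swap_castSucc_succ hf i v
    | one => rfl
    | mul τ₁ τ₂ _ _ h₁ h₂ => rw [Equiv.Perm.coe_mul, ← Function.comp_assoc, h₂, h₁]

end Symmetry

section Polarization

variable {V : Type*} [NormedAddCommGroup V] [NormedSpace ℝ V] (E : Type*) [NormedAddCommGroup E]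
  [NormedSpace ℝ E]

lemma map_add_smul_const_eq_sum {E : Type*} [NormedAddCommGroup E] [NormedSpace ℝ E] {j : ℕ}
    {M : ContinuousMultilinearMap ℝ (fun _ : Fin j => V) E} (c v : V) (t : ℝ) :
    M (fun _ => t • v + c) =
      ∑ s : Finset (Fin j), t ^ s.card • M (s.piecewise (fun _ => v) fun _ => c) := by
  have hadd := M.map_add_univ (fun _ => t • v) (fun _ => c)
  refine hadd.trans (Finset.sum_congr rfl fun s _ => ?_)
  have hsmul := M.map_piecewise_smul (fun _ => t) (s.piecewise (fun _ => v) fun _ => c) s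
  rw [Finset.prod_const] at hsmul
  rw [← hsmul]
  congr 1
  ext i
  by_cases hi : i ∈ s <;> simp [hi]

lemma map_piecewise_eq_of_card_eq {E : Type*} [NormedAddCommGroup E] [NormedSpace ℝ E] {j : ℕ}
    {M : ContinuousMultilinearMap ℝ (fun _ : Fin j => V) E}
    (hM : ∀ (v : Fin j → V) (σ : Equiv.Perm (Fin j)), M (v ∘ σ) = M v) (c v : V)
    {s t : Finset (Fin j)} (hst : s.card = t.card) :
    M (s.piecewise (fun _ => v) fun _ => c) = M (t.piecewise (fun _ => v) fun _ => c) := by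
  obtain ⟨σ, rfl⟩ := Equiv.Perm.exists_map_finset_eq s t hst
  rw [← hM ((s.map σ.toEmbedding).piecewise _ _) σ]
  congr 1
  ext i
  simp [Finset.piecewise]

lemma exists_norm_piecewise_le {n : ℕ} {t : Fin (n + 1) → ℝ} (ht : Function.Injective t) :
    ∃ C > (0 : ℝ), ∀ j ≤ n, ∀ M : ContinuousMultilinearMap ℝ (fun _ : Fin j => V) E,
      (∀ (v : Fin j → V) (σ : Equiv.Perm (Fin j)), M (v ∘ σ) = M v) → ∀ (c v : V) (X : ℝ),
      (∀ k, ‖M fun _ => t k • v + c‖ ≤ X) → ∀ s : Finset (Fin j),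
        ‖M (s.piecewise (fun _ => v) fun _ => c)‖ ≤ C * X := by
  obtain ⟨C, hC, hV⟩ := exists_norm_le_mul_sum_norm_vandermonde (E := E) t ht
  refine ⟨C * (n + 1), by positivity, fun j hj M hM c v X hX s => ?_⟩
  set a : Fin (n + 1) → E := fun i => ∑ s : Finset (Fin j) with s.card = (i : ℕ),
    M (s.piecewise (fun _ => v) fun _ => c) with ha
  have hexpand : ∀ k, M (fun _ => t k • v + c) = ∑ i : Fin (n + 1), t k ^ (i : ℕ) • a i := by
    intro k
    rw [map_add_smul_const_eq_sum, ← Finset.sum_fiberwise _ fun s : Finset (Fin j) =>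
      (⟨s.card, by have := card_finset_fin_le s; omega⟩ : Fin (n + 1))]
    refine Finset.sum_congr rfl fun i _ => ?_
    rw [ha, Finset.smul_sum]
    refine Finset.sum_congr (by ext; simp [Fin.ext_iff]) fun s hs => ?_
    rw [(Finset.mem_filter.mp hs).2]
  have hcoeff := hV a ⟨s.card, by have := card_finset_fin_le s; omega⟩
  have hsum : a ⟨s.card, by have := card_finset_fin_le s; omega⟩ =
      (j.choose s.card : ℝ) • M (s.piecewise (fun _ => v) fun _ => c) := by
    rw [ha]
    dsimp only
    rw [Finset.sum_congr rfl fun s' hs' =>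
      map_piecewise_eq_of_card_eq hM c v (Finset.mem_filter.mp hs').2, Finset.sum_const]
    simp [Nat.cast_smul_eq_nsmul]
  have hchoose : (1 : ℝ) ≤ j.choose s.card := by
    exact_mod_cast Nat.choose_pos (card_finset_fin_le s)
  simp only [← hexpand, hsum, norm_smul, Real.norm_natCast] at hcoeff
  calc _ ≤ _ := le_mul_of_one_le_left (norm_nonneg _) hchoose
    _ ≤ _ := hcoeff
    _ ≤ C * ∑ _k : Fin (n + 1), X := by gcongr with k _; exact hX k
    _ = _ := by simp; ring

end Polarization

section Cone

/-- Directions in a narrow cone around `ε • e_b`, where `ε = ±1`. -/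
def coneDir (n : ℕ) (b : Fin 2) (ε : ℤˣ) (k : Fin (n + 1)) : Fin 2 → ℝ :=
  (taylorNode n k / 4) • Pi.single (b + 1) 1 + Pi.single b (ε : ℝ)

lemma coneDir_apply_self (n : ℕ) (b : Fin 2) (ε : ℤˣ) (k : Fin (n + 1)) :
    coneDir n b ε k b = ε := by
  fin_cases b <;> simp [coneDir]

lemma coneDir_apply_add_one (n : ℕ) (b : Fin 2) (ε : ℤˣ) (k : Fin (n + 1)) :
    coneDir n b ε k (b + 1) = taylorNode n k / 4 := by
  fin_cases b <;> simp [coneDir]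

lemma norm_coneDir_le (n : ℕ) (b : Fin 2) (ε : ℤˣ) (k : Fin (n + 1)) : ‖coneDir n b ε k‖ ≤ 1 := by
  have hself : |coneDir n b ε k b| ≤ 1 := by
    rw [coneDir_apply_self]
    rcases Int.units_eq_one_or ε with rfl | rfl <;> simp
  have hother : |coneDir n b ε k (b + 1)| ≤ 1 := by
    rw [coneDir_apply_add_one, abs_of_pos (by have := taylorNode_pos n k; positivity)]
    linarith [taylorNode_le_one n k]
  refine (pi_norm_le_iff_of_nonneg zero_le_one).mpr fun i => ?_
  obtain rfl | rfl : i = b ∨ i = b + 1 := by lia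
  exacts [hself, hother]

lemma norm_le_sum_norm_apply_single {E ι : Type*} [NormedAddCommGroup E] [NormedSpace ℝ E]
    [Fintype ι] [DecidableEq ι] {j : ℕ}
    (M : ContinuousMultilinearMap ℝ (fun _ : Fin j => ι → ℝ) E) :
    ‖M‖ ≤ ∑ I : Fin j → ι, ‖M fun i => Pi.single (I i) 1‖ := by
  refine M.opNorm_le_bound (by positivity) fun v => ?_
  have hexpand : M v = ∑ I : Fin j → ι, (∏ i, v i (I i)) • M fun i => Pi.single (I i) 1 := by
    conv_lhs => rw [show v = fun i => ∑ b, v i b • Pi.single b 1 from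
      funext fun i => pi_eq_sum_univ' (v i)]
    simp only [M.map_sum, M.map_smul_univ]
  rw [hexpand, Finset.sum_mul]
  refine norm_sum_le_of_le _ fun I _ => ?_
  rw [norm_smul, norm_prod, mul_comm]
  gcongr with i
  exact norm_le_pi_norm (v i) (I i)

variable (E : Type*) [NormedAddCommGroup E] [NormedSpace ℝ E]

lemma exists_norm_le_coneDir (n : ℕ) :
    ∃ C > (0 : ℝ), ∀ j ≤ n, ∀ M : ContinuousMultilinearMap ℝ (fun _ : Fin j => Fin 2 → ℝ) E,
      (∀ (v : Fin j → Fin 2 → ℝ) (σ : Equiv.Perm (Fin j)), M (v ∘ σ) = M v) →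
      ∀ (b : Fin 2) (ε : ℤˣ) (X : ℝ), (∀ k, ‖M fun _ => coneDir n b ε k‖ ≤ X) → ‖M‖ ≤ C * X := by
  obtain ⟨C, hC, hpiece⟩ := exists_norm_piecewise_le (V := Fin 2 → ℝ) E
    (t := fun k => taylorNode n k / 4) fun a b hab => taylorNode_injective n (by simpa using hab)
  refine ⟨2 ^ n * C, by positivity, fun j hj M hM b ε X hX => ?_⟩
  have hbasis : ∀ I : Fin j → Fin 2, ‖M fun i => Pi.single (I i) 1‖ ≤ C * X := by
    intro I
    set s : Finset (Fin j) := {i | I i ≠ b}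
    have hsign : (s.piecewise (fun _ => Pi.single (b + 1) 1) fun _ => Pi.single b (ε : ℝ)) =
        fun i => (s.piecewise (fun _ => 1) fun _ => (ε : ℝ)) i •
          (Pi.single (I i) 1 : Fin 2 → ℝ) := by
      funext i
      by_cases hi : I i = b
      · simp [s, hi, ← Pi.single_smul']
      · simp [s, show I i = b + 1 by lia]
    have hone : ‖∏ i, (s.piecewise (fun _ => 1) fun _ => (ε : ℝ)) i‖ = 1 := by
      rw [norm_prod]
      refine Finset.prod_eq_one fun i _ => ?_
      by_cases hi : i ∈ s <;> rcases Int.units_eq_one_or ε with rfl | rfl <;> simp [hi]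
    have hs := hpiece j hj M hM (Pi.single b (ε : ℝ)) (Pi.single (b + 1) 1) X hX s
    rwa [hsign, M.map_smul_univ, norm_smul, hone, one_mul] at hs
  calc ‖M‖ ≤ ∑ I : Fin j → Fin 2, ‖M fun i => Pi.single (I i) 1‖ :=
        norm_le_sum_norm_apply_single M
    _ ≤ ∑ _I : Fin j → Fin 2, C * X := Finset.sum_le_sum fun I _ => hbasis I
    _ = 2 ^ j * (C * X) := by simp
    _ ≤ 2 ^ n * (C * X) := by
        have := (norm_nonneg _).trans (hX 0)
        gcongr
        norm_num
    _ = 2 ^ n * C * X := by ring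

lemma mem_Dr_iff (b : Fin 2) {r : ℝ} {x : Fin 2 → ℝ} :
    x ∈ Dr r ↔ x b ^ 2 + x (b + 1) ^ 2 < r ^ 2 := by
  fin_cases b <;> simp [Dr, add_comm]

lemma exists_coneDir_segment_subset_Dr {ρ : ℝ} (hρ : 0 < ρ) {x : Fin 2 → ℝ} (hx : x ∈ Dr ρ)
    (n : ℕ) :
    ∃ b ε, ∀ k, ∀ τ ∈ Icc 0 (ρ / 4), x + τ • coneDir n b ε k ∈ Dr ρ := by
  obtain ⟨b, hb⟩ : ∃ b, |x (b + 1)| ≤ |x b| := by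
    rcases le_total |x 1| |x 0| with h | h
    exacts [⟨0, h⟩, ⟨1, h⟩]
  obtain ⟨ε, hε, hεb⟩ : ∃ ε : ℤˣ, (ε : ℝ) ^ 2 = 1 ∧ ε * x b = -|x b| := by
    rcases abs_choice (x b) with h | h
    exacts [⟨-1, by simp, by simp [h]⟩, ⟨1, by simp, by simp [h]⟩]
  refine ⟨b, ε, fun k τ ⟨hτ0, hτ⟩ => ?_⟩
  rw [mem_Dr_iff b] at hx ⊢
  simp only [Pi.add_apply, Pi.smul_apply, smul_eq_mul, coneDir_apply_self, coneDir_apply_add_one]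
  set t := taylorNode n k / 4
  have ht0 : 0 ≤ t := by have := taylorNode_pos n k; positivity
  have ht : t ≤ 1 / 4 := by have := taylorNode_le_one n k; simp only [t]; linarith
  have hsq : x (b + 1) ^ 2 ≤ |x b| ^ 2 := by rw [← sq_abs (x (b + 1))]; gcongr
  have hcross : t * x (b + 1) ≤ |x b| / 4 := by
    nlinarith [le_abs_self (x (b + 1)), abs_nonneg (x b), abs_nonneg (x (b + 1))]
  have hexpand : (x b + τ * ε) ^ 2 + (x (b + 1) + τ * t) ^ 2 ≤
      x b ^ 2 + x (b + 1) ^ 2 - τ * |x b| + 2 * τ ^ 2 := by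
    calc _ = x b ^ 2 + x (b + 1) ^ 2 + 2 * τ * (ε * x b + t * x (b + 1))
          + τ ^ 2 * (ε ^ 2 + t ^ 2) := by ring
      _ ≤ x b ^ 2 + x (b + 1) ^ 2 + 2 * τ * (-|x b| + |x b| / 4) + τ ^ 2 * (1 + 1) := by
          rw [hε, hεb]; gcongr; nlinarith
      _ ≤ _ := by nlinarith [mul_nonneg hτ0 (abs_nonneg (x b))]
  refine hexpand.trans_lt ?_
  rcases le_total (2 * τ) |x b| with hfar | hnear
  · nlinarith
  · nlinarith [sq_abs (x b), abs_nonneg (x b)]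

end Cone

section Interpolation

variable {E : Type*} [NormedAddCommGroup E] [NormedSpace ℝ E]

/-- The density `|D^{n+1}f| + s^{-(n+1)}|f|` at length scale `s`, which controls all intermediate
derivatives of `f`. -/
def jetDensity {V : Type*} [NormedAddCommGroup V] [NormedSpace ℝ V] (n : ℕ) (s : ℝ) (f : V → E)
    (y : V) : ℝ :=
  ‖iteratedFDeriv ℝ (n + 1) f y‖ + ‖f y‖ / s ^ (n + 1)

section Segment

variable {V : Type*} [NormedAddCommGroup V] [NormedSpace ℝ V] {f : V → E} {x e : V} {s S : ℝ}

lemma jetDensity_nonneg (n : ℕ) (hs : 0 ≤ s) (f : V → E) (y : V) : 0 ≤ jetDensity n s f y := by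
  unfold jetDensity; positivity

lemma continuousOn_jetDensity {Ω : Set V} (n : ℕ) (s : ℝ) (hf : ∀ y ∈ Ω, ContDiffAt ℝ ∞ f y) :
    ContinuousOn (jetDensity n s f) Ω := by
  have hD : ∀ j : ℕ, ContinuousOn (iteratedFDeriv ℝ j f) Ω := fun j y hy =>
    ((hf y hy).iteratedFDeriv_right (m := 0)
      (by simpa using! mod_cast le_top)).continuousAt.continuousWithinAt
  have hf' : ContinuousOn f Ω := fun y hy => (hf y hy).continuousAt.continuousWithinAt
  exact (hD _).norm.add (hf'.norm.div_const _)

lemma isDerivChain_iteratedFDeriv (hf : ∀ τ ∈ Icc 0 S, ContDiffAt ℝ ∞ f (x + τ • e)) :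
    IsDerivChain (fun j τ => iteratedFDeriv ℝ j f (x + τ • e) fun _ => e) S := by
  intro j τ hτ
  have hdiff : DifferentiableAt ℝ (fun y => iteratedFDeriv ℝ j f y fun _ => e) (x + τ • e) :=
    (contDiffAt_iteratedFDeriv_apply (j := 1) ((hf τ hτ).of_le (by exact_mod_cast le_top)) _)
      |>.differentiableAt (by simp)
  have hline : HasDerivAt (fun τ : ℝ => x + τ • e) e τ := by
    simpa using ((hasDerivAt_id τ).smul_const e).const_add x
  have hsucc := iteratedFDeriv_succ_apply_of_contDiffAt (n := j)
    ((hf τ hτ).of_le (by exact_mod_cast le_top)) fun _ => e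
  beta_reduce
  rw [hsucc]
  exact hdiff.hasFDerivAt.comp_hasDerivAt τ hline

lemma intervalIntegrable_jetDensity_line (n : ℕ) (s : ℝ) (hS : 0 ≤ S)
    (hf : ∀ τ ∈ Icc 0 S, ContDiffAt ℝ ∞ f (x + τ • e)) :
    IntervalIntegrable (fun τ : ℝ => jetDensity n s f (x + τ • e)) volume 0 S :=
  ContinuousOn.intervalIntegrable_of_Icc hS <|
    (continuousOn_jetDensity n s (Ω := (fun τ : ℝ => x + τ • e) '' Icc 0 S)
      (by rintro _ ⟨τ, hτ, rfl⟩; exact hf τ hτ)).comp (by fun_prop) (mapsTo_image _ _)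

lemma integral_norm_iteratedFDeriv_apply_le (n : ℕ) (hs : 0 ≤ s) (hS : 0 ≤ S) (he : ‖e‖ ≤ 1)
    (hf : ∀ τ ∈ Icc 0 S, ContDiffAt ℝ ∞ f (x + τ • e)) :
    ∫ τ in 0..S, ‖iteratedFDeriv ℝ (n + 1) f (x + τ • e) fun _ => e‖ ≤
      ∫ τ in 0..S, jetDensity n s f (x + τ • e) := by
  refine intervalIntegral.integral_mono_on hS
    (((isDerivChain_iteratedFDeriv hf).continuousOn _).norm.intervalIntegrable_of_Icc hS)
    (intervalIntegrable_jetDensity_line n s hS hf) fun τ _ => ?_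
  calc _ ≤ ‖iteratedFDeriv ℝ (n + 1) f (x + τ • e)‖ * ∏ _i : Fin (n + 1), ‖e‖ :=
        ContinuousMultilinearMap.le_opNorm _ _
    _ ≤ ‖iteratedFDeriv ℝ (n + 1) f (x + τ • e)‖ := by
        rw [Finset.prod_const]
        exact mul_le_of_le_one_right (norm_nonneg _) (pow_le_one₀ (norm_nonneg _) he)
    _ ≤ _ := le_add_of_nonneg_right (by positivity)

lemma integral_norm_le_integral_jetDensity (n : ℕ) (hs : 0 < s) (hS : 0 ≤ S)
    (hf : ∀ τ ∈ Icc 0 S, ContDiffAt ℝ ∞ f (x + τ • e)) :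
    ∫ τ in 0..S, ‖f (x + τ • e)‖ ≤
      s ^ (n + 1) * ∫ τ in 0..S, jetDensity n s f (x + τ • e) := by
  rw [← intervalIntegral.integral_const_mul]
  refine intervalIntegral.integral_mono_on hS
    (((isDerivChain_iteratedFDeriv hf).continuousOn 0).norm.intervalIntegrable_of_Icc hS)
    ((intervalIntegrable_jetDensity_line n s hS hf).const_mul _) fun τ _ => ?_
  rw [jetDensity, mul_add, mul_div_cancel₀ _ (by positivity)]
  exact le_add_of_nonneg_left (by positivity)

lemma exists_norm_le_integral_jetDensity (E V : Type*) [NormedAddCommGroup E] [NormedSpace ℝ E]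
    [CompleteSpace E] [NormedAddCommGroup V] [NormedSpace ℝ V] (n : ℕ) :
    ∃ C > (0 : ℝ), ∀ (f : V → E) (x e : V) (s : ℝ), 0 < s → ‖e‖ ≤ 1 →
      (∀ τ ∈ Icc 0 (2 * s), ContDiffAt ℝ ∞ f (x + τ • e)) → ∀ τ ∈ Icc 0 s,
        ‖f (x + τ • e)‖ ≤ C * (s ^ n * ∫ τ in 0..2 * s, jetDensity n s f (x + τ • e)) := by
  obtain ⟨C, hC, hchain⟩ := IsDerivChain.exists_norm_le_integral E n
  refine ⟨2 * C, by positivity, fun f x e s hs he hf τ hτ => ?_⟩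
  have hbound := hchain _ s hs (isDerivChain_iteratedFDeriv hf) τ hτ
  simp only [iteratedFDeriv_zero_apply] at hbound
  set w := ∫ τ in 0..2 * s, jetDensity n s f (x + τ • e)
  calc _ ≤ _ := hbound
    _ ≤ C * (s ^ (n + 1) * w / s + s ^ n * w) := by
        gcongr
        · exact integral_norm_le_integral_jetDensity n hs (by positivity) hf
        · exact integral_norm_iteratedFDeriv_apply_le n hs.le (by positivity) he hf
    _ = _ := by field_simp; ring

lemma exists_norm_iteratedFDeriv_apply_mul_pow_le (E V : Type*) [NormedAddCommGroup E]
    [NormedSpace ℝ E] [CompleteSpace E] [NormedAddCommGroup V] [NormedSpace ℝ V] (n : ℕ) :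
    ∃ C > (0 : ℝ), ∀ (f : V → E) (x e : V) (s A h : ℝ), 0 < s → ‖e‖ ≤ 1 →
      (∀ τ ∈ Icc 0 (2 * s), ContDiffAt ℝ ∞ f (x + τ • e)) → h ∈ Icc 0 (2 * s) →
      (∀ τ ∈ Icc 0 h, ‖f (x + τ • e)‖ ≤ A) → ∀ j ≤ n,
        ‖iteratedFDeriv ℝ j f x fun _ => e‖ * h ^ j ≤
          C * (A + h ^ n * ∫ τ in 0..2 * s, jetDensity n s f (x + τ • e)) := by
  obtain ⟨C, hC, hchain⟩ := IsDerivChain.exists_norm_mul_pow_le E n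
  refine ⟨C, hC, fun f x e s A h hs he hf hh hA j hj => ?_⟩
  have hbound := hchain _ _ A h (isDerivChain_iteratedFDeriv hf) hh (by simpa using hA) j hj
  simp only [zero_smul, add_zero] at hbound
  have hh0 := hh.1
  refine hbound.trans ?_
  gcongr
  exact integral_norm_iteratedFDeriv_apply_le n hs.le (by positivity) he hf

end Segment

/-- `A` and `h` are an amplitude and a length scale for the `n`-jet of `f` at `x`. -/
def HasJetScale {V : Type*} [NormedAddCommGroup V] [NormedSpace ℝ V] (n : ℕ) (K : ℝ) (f : V → E)
    (x : V) (A h : ℝ) : Prop :=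
  ∀ j ≤ n, ‖iteratedFDeriv ℝ j f x‖ ≤ K * (A / h ^ j)

lemma exists_hasJetScale_of_coneDir (E : Type*) [NormedAddCommGroup E] [NormedSpace ℝ E]
    [CompleteSpace E] (n : ℕ) :
    ∃ K > (0 : ℝ), ∀ (f : (Fin 2 → ℝ) → E) (x : Fin 2 → ℝ) (b : Fin 2) (ε : ℤˣ) (s A h Q : ℝ),
      h ∈ Ioc 0 s → (∀ k, ∀ τ ∈ Icc 0 (2 * s), ContDiffAt ℝ ∞ f (x + τ • coneDir n b ε k)) →
      (∀ k, ∀ τ ∈ Icc 0 s, ‖f (x + τ • coneDir n b ε k)‖ ≤ A) →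
      (∀ k, ∫ τ in 0..2 * s, jetDensity n s f (x + τ • coneDir n b ε k) ≤ Q) →
      (n ≠ 0 → h ^ n * Q ≤ A) → HasJetScale n K f x A h := by
  obtain ⟨C₁, hC₁, hjet⟩ := exists_norm_iteratedFDeriv_apply_mul_pow_le E (Fin 2 → ℝ) n
  obtain ⟨C₂, -, hpolar⟩ := exists_norm_le_coneDir E n
  refine ⟨max 1 (C₂ * (C₁ * 2)), by positivity,
    fun f x b ε s A h Q ⟨h0, hhs⟩ hf hfA hQ hhQ j hj => ?_⟩
  have hs : 0 < s := h0.trans_le hhs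
  have hx : ‖f x‖ ≤ A := by simpa using hfA 0 0 ⟨le_rfl, hs.le⟩
  have hA : 0 ≤ A := (norm_nonneg _).trans hx
  have hsmooth : ContDiffAt ℝ ∞ f x := by simpa using hf 0 0 ⟨le_rfl, by positivity⟩
  rcases eq_or_ne n 0 with rfl | hn
  · obtain rfl : j = 0 := by omega
    simpa using hx.trans (le_mul_of_one_le_left hA (le_max_left _ _))
  have hdir : ∀ k, ‖iteratedFDeriv ℝ j f x fun _ => coneDir n b ε k‖ ≤ C₁ * 2 * (A / h ^ j) := by
    intro k
    rw [← mul_div_assoc, le_div_iff₀ (by positivity)]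
    calc _ ≤ C₁ * (A + h ^ n * _) := hjet f x _ s A h hs (norm_coneDir_le n b ε k) (hf k)
          ⟨h0.le, by linarith⟩ (fun τ hτ => hfA k τ ⟨hτ.1, hτ.2.trans hhs⟩) j hj
      _ ≤ C₁ * (A + h ^ n * Q) := by gcongr; exact hQ k
      _ ≤ C₁ * (A + A) := by gcongr; exact hhQ hn
      _ = C₁ * 2 * A := by ring
  calc ‖iteratedFDeriv ℝ j f x‖ ≤ C₂ * (C₁ * 2 * (A / h ^ j)) :=
        hpolar j hj _ (fun v σ => iteratedFDeriv_comp_perm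
          (hsmooth.of_le (by exact_mod_cast le_top)) v σ) b ε _ hdir
    _ = C₂ * (C₁ * 2) * (A / h ^ j) := by ring
    _ ≤ _ := by gcongr; exact le_max_right _ _

lemma exists_hasJetScale (E : Type*) [NormedAddCommGroup E] [NormedSpace ℝ E] [CompleteSpace E]
    (n : ℕ) : ∃ K > (0 : ℝ), ∀ (f : (Fin 2 → ℝ) → E) (ρ β s : ℝ), 0 < β → 0 < s → 8 * s ≤ ρ →
      (∀ y ∈ Dr ρ, ContDiffAt ℝ ∞ f y) → (∀ y ∈ Dr ρ, ‖f y‖ ≤ β) → ∀ x ∈ Dr ρ, ∃ b ε,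
        (∀ k, ∀ τ ∈ Icc 0 (2 * s), x + τ • coneDir n b ε k ∈ Dr ρ) ∧
        ∃ A h, A ∈ Icc 0 β ∧ h ∈ Ioc 0 s ∧ HasJetScale n K f x A h ∧
          A / h ^ n ≤ K * ∑ k, ∫ τ in 0..2 * s, jetDensity n s f (x + τ • coneDir n b ε k) := by
  obtain ⟨C₀, hC₀, hsup⟩ := exists_norm_le_integral_jetDensity E (Fin 2 → ℝ) n
  obtain ⟨C₁, hC₁, hjet⟩ := exists_hasJetScale_of_coneDir E n
  refine ⟨C₁ + (C₀ + 1), by positivity, fun f ρ β s hβ hs hsρ hf hfβ x hx => ?_⟩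
  obtain ⟨b, ε, hseg⟩ := exists_coneDir_segment_subset_Dr (by linarith) hx n
  replace hseg : ∀ k, ∀ τ ∈ Icc 0 (2 * s), x + τ • coneDir n b ε k ∈ Dr ρ := fun k τ hτ =>
    hseg k τ ⟨hτ.1, by linarith [hτ.2]⟩
  refine ⟨b, ε, hseg, ?_⟩
  have hsmooth : ∀ k, ∀ τ ∈ Icc 0 (2 * s), ContDiffAt ℝ ∞ f (x + τ • coneDir n b ε k) :=
    fun k τ hτ => hf _ (hseg k τ hτ)
  set w : Fin (n + 1) → ℝ := fun k => ∫ τ in 0..2 * s, jetDensity n s f (x + τ • coneDir n b ε k)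
  set Q := ∑ k, w k
  have hw : ∀ k, 0 ≤ w k := fun k => intervalIntegral.integral_nonneg (by positivity)
    fun _ _ => jetDensity_nonneg n hs.le _ _
  have hwQ : ∀ k, w k ≤ Q := fun k => Finset.single_le_sum (fun k _ => hw k) (Finset.mem_univ k)
  have hQ : 0 ≤ Q := (hw 0).trans (hwQ 0)
  set A := min β (C₀ * (s ^ n * Q))
  have hA : 0 ≤ A := by positivity
  have hAQ : A = 0 → Q = 0 := fun hA0 => by
    rcases min_choice β (C₀ * (s ^ n * Q)) with h | h
    · exact absurd (h.symm.trans hA0) hβ.ne'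
    · simpa [hC₀.ne', hs.ne'] using h.symm.trans hA0
  have hfA : ∀ k, ∀ τ ∈ Icc 0 s, ‖f (x + τ • coneDir n b ε k)‖ ≤ A := fun k τ hτ =>
    le_min (hfβ _ (hseg k τ ⟨hτ.1, by linarith [hτ.2]⟩)) <|
      (hsup f x _ s hs (norm_coneDir_le n b ε k) (hsmooth k) τ hτ).trans (by gcongr; exact hwQ k)
  obtain ⟨h, h0, hhs, hhQ, hAh⟩ := exists_balancing_scale n hs hA hQ hAQ
  refine ⟨A, h, ⟨hA, min_le_left _ _⟩, ⟨h0, hhs⟩, fun j hj => ?_, ?_⟩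
  · refine (hjet f x b ε s A h Q ⟨h0, hhs⟩ hsmooth hfA hwQ hhQ j hj).trans ?_
    gcongr
    linarith
  · calc A / h ^ n ≤ A / s ^ n + Q := hAh
      _ ≤ C₀ * (s ^ n * Q) / s ^ n + Q := by gcongr; exact min_le_right _ _
      _ = (C₀ + 1) * Q := by field_simp
      _ ≤ _ := mul_le_mul_of_nonneg_right (by linarith) hQ

lemma sq_intervalIntegral_le {g : ℝ → ℝ} {S : ℝ} (hS : 0 < S) (hg : ContinuousOn g (Icc 0 S)) :
    (∫ τ in 0..S, g τ) ^ 2 ≤ S * ∫ τ in 0..S, g τ ^ 2 := by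
  have hint : ∀ {F : ℝ → ℝ}, ContinuousOn F (Icc 0 S) → IntegrableOn F (uIoc 0 S) := fun hF => by
    rw [uIoc_of_le hS.le]
    exact (hF.integrableOn_compact isCompact_Icc).mono_set Ioc_subset_Icc_self
  have hJensen : (⨍ τ in 0..S, g τ) ^ 2 ≤ ⨍ τ in 0..S, g τ ^ 2 :=
    even_two.convexOn_pow.map_set_average_le (continuous_pow 2).continuousOn isClosed_univ
      (by simp [uIoc_of_le hS.le, hS]) (by simp [uIoc_of_le hS.le]) (by simp) (hint hg)
      (hint (hg.pow 2))
  rw [interval_average_eq_div, interval_average_eq_div, sub_zero, div_pow,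
    div_le_div_iff₀ (by positivity) hS] at hJensen
  nlinarith

lemma lintegral_lintegral_add_smul {V : Type*} [NormedAddCommGroup V] [NormedSpace ℝ V]
    [MeasurableSpace V] [BorelSpace V] [SecondCountableTopology V] {μ : Measure V} [SFinite μ]
    [μ.IsAddRightInvariant] {Z : V → ENNReal} (hZ : Measurable Z) (e : V) (T : Set ℝ) :
    ∫⁻ x, (∫⁻ τ in T, Z (x + τ • e)) ∂μ = volume T * ∫⁻ x, Z x ∂μ := by
  have hmeas : Measurable fun p : V × ℝ => Z (p.1 + p.2 • e) := hZ.comp (by fun_prop)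
  rw [lintegral_lintegral_swap hmeas.aemeasurable]
  simp only [lintegral_add_right_eq_self Z]
  rw [setLIntegral_const, mul_comm]

lemma lintegral_sum_lintegral_add_smul {V ι : Type*} [Fintype ι] [NormedAddCommGroup V]
    [NormedSpace ℝ V] [MeasurableSpace V] [BorelSpace V] [SecondCountableTopology V] {μ : Measure V}
    [SFinite μ] [μ.IsAddRightInvariant] {Z : V → ENNReal} (hZ : Measurable Z) (e : ι → V)
    (T : Set ℝ) :
    ∫⁻ x, (∑ i, ∫⁻ τ in T, Z (x + τ • e i)) ∂μ = Fintype.card ι * (volume T * ∫⁻ x, Z x ∂μ) := by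
  have hmeas : ∀ i, Measurable fun p : V × ℝ => Z (p.1 + p.2 • e i) := fun i =>
    hZ.comp (by fun_prop)
  rw [lintegral_finsetSum _ fun i _ => (hmeas i).lintegral_prod_right']
  simp only [lintegral_lintegral_add_smul hZ, Finset.sum_const, Finset.card_univ, nsmul_eq_mul]

lemma ofReal_sq_sum_intervalIntegral_le {V ι : Type*} [NormedAddCommGroup V] [NormedSpace ℝ V]
    [Fintype ι] {Ω : Set V} {g : V → ℝ} (hg : ContinuousOn g Ω) {S : ℝ} (hS : 0 < S) {x : V}
    {e : ι → V} (hseg : ∀ k, ∀ τ ∈ Icc 0 S, x + τ • e k ∈ Ω) :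
    ENNReal.ofReal ((∑ k, ∫ τ in 0..S, g (x + τ • e k)) ^ 2) ≤
      ENNReal.ofReal (Fintype.card ι * S) *
        ∑ k, ∫⁻ τ in Icc 0 S, Ω.indicator (fun y => ENNReal.ofReal (g y ^ 2)) (x + τ • e k) := by
  have hline : ∀ k, ContinuousOn (fun τ : ℝ => g (x + τ • e k)) (Icc 0 S) := fun k =>
    hg.comp (by fun_prop) (hseg k)
  have hlint : ∀ k, ENNReal.ofReal (∫ τ in 0..S, g (x + τ • e k) ^ 2) =
      ∫⁻ τ in Icc 0 S, Ω.indicator (fun y => ENNReal.ofReal (g y ^ 2)) (x + τ • e k) := fun k => by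
    rw [intervalIntegral.integral_of_le hS.le, ← integral_Icc_eq_integral_Ioc,
      ofReal_integral_eq_lintegral_ofReal (f := fun τ => g (x + τ • e k) ^ 2)
        (((hline k).pow 2).integrableOn_compact isCompact_Icc) (.of_forall fun _ => sq_nonneg _)]
    exact setLIntegral_congr_fun measurableSet_Icc fun τ hτ => by
      rw [indicator_of_mem (hseg k τ hτ)]
  calc ENNReal.ofReal ((∑ k, ∫ τ in 0..S, g (x + τ • e k)) ^ 2)
      ≤ ENNReal.ofReal (Fintype.card ι * ∑ k, (∫ τ in 0..S, g (x + τ • e k)) ^ 2) :=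
        ENNReal.ofReal_le_ofReal sq_sum_le_card_mul_sum_sq
    _ ≤ ENNReal.ofReal (Fintype.card ι * ∑ k, S * ∫ τ in 0..S, g (x + τ • e k) ^ 2) := by
        gcongr with k
        exact sq_intervalIntegral_le hS (hline k)
    _ = _ := by
        rw [← Finset.mul_sum, ← mul_assoc, ENNReal.ofReal_mul (by positivity),
          ENNReal.ofReal_sum_of_nonneg fun k _ => intervalIntegral.integral_nonneg hS.le
            fun _ _ => sq_nonneg _]
        simp only [hlint]

lemma lintegral_sq_le_of_le_sum_intervalIntegral {V ι κ : Type*} [NormedAddCommGroup V]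
    [NormedSpace ℝ V] [MeasurableSpace V] [BorelSpace V] [SecondCountableTopology V] {μ : Measure V}
    [SFinite μ] [μ.IsAddRightInvariant] [Fintype ι] [Fintype κ] {Ω : Set V} (hΩ : MeasurableSet Ω)
    {F g : V → ℝ} (hg : ContinuousOn g Ω) {S : ℝ} (hS : 0 < S) (e : κ → ι → V)
    (hF : ∀ x ∈ Ω, ∃ c, (∀ i, ∀ τ ∈ Icc 0 S, x + τ • e c i ∈ Ω) ∧
      |F x| ≤ ∑ i, ∫ τ in 0..S, g (x + τ • e c i)) :
    ∫⁻ x in Ω, ENNReal.ofReal (F x ^ 2) ∂μ ≤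
      ENNReal.ofReal (Fintype.card κ * (Fintype.card ι * S) ^ 2) *
        ∫⁻ x in Ω, ENNReal.ofReal (g x ^ 2) ∂μ := by
  classical
  set Z := Ω.indicator fun y => ENNReal.ofReal (g y ^ 2)
  have hZ : Measurable Z := by
    simp only [Z, ← piecewise_eq_indicator]
    exact (ENNReal.continuous_ofReal.comp_continuousOn (hg.pow 2)).measurable_piecewise
      continuousOn_const hΩ
  set q : V → ENNReal := fun x => ∑ p : κ × ι, ∫⁻ τ in Icc 0 S, Z (x + τ • e p.1 p.2)
  have hpoint : ∀ x ∈ Ω, ENNReal.ofReal (F x ^ 2) ≤ ENNReal.ofReal (Fintype.card ι * S) * q x := by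
    intro x hx
    obtain ⟨c, hseg, hFx⟩ := hF x hx
    calc _ ≤ ENNReal.ofReal ((∑ i, ∫ τ in 0..S, g (x + τ • e c i)) ^ 2) := by
          rw [← sq_abs]
          gcongr
      _ ≤ _ := ofReal_sq_sum_intervalIntegral_le hg hS hseg
      _ ≤ _ := by
          simp only [q, Fintype.sum_prod_type]
          gcongr
          exact Finset.single_le_sum (f := fun c => ∑ i, ∫⁻ τ in Icc 0 S, Z (x + τ • e c i))
            (fun _ _ => zero_le) (Finset.mem_univ c)
  calc _ ≤ ∫⁻ x in Ω, ENNReal.ofReal (Fintype.card ι * S) * q x ∂μ := setLIntegral_mono' hΩ hpoint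
    _ ≤ ∫⁻ x, ENNReal.ofReal (Fintype.card ι * S) * q x ∂μ := setLIntegral_le_lintegral _ _
    _ = _ := by
        rw [lintegral_const_mul' _ _ ENNReal.ofReal_ne_top, lintegral_sum_lintegral_add_smul hZ,
          lintegral_indicator hΩ, Real.volume_Icc, ← ENNReal.ofReal_natCast, ← mul_assoc,
          ← mul_assoc, ← ENNReal.ofReal_mul (by positivity), ← ENNReal.ofReal_mul (by positivity),
          Fintype.card_prod]
        congr 2
        push_cast
        ring

lemma isOpen_Dr (r : ℝ) : IsOpen (Dr r) := isOpen_lt (by fun_prop) (by fun_prop)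

lemma exists_lintegral_jetScale_le (E : Type*) [NormedAddCommGroup E] [NormedSpace ℝ E]
    [CompleteSpace E] (n : ℕ) : ∃ K > (0 : ℝ), ∀ (f : (Fin 2 → ℝ) → E) (ρ β s : ℝ), 0 < β → 0 < s →
      8 * s ≤ ρ → (∀ y ∈ Dr ρ, ContDiffAt ℝ ∞ f y) → (∀ y ∈ Dr ρ, ‖f y‖ ≤ β) →
      ∃ A h : (Fin 2 → ℝ) → ℝ,
        (∀ x ∈ Dr ρ, A x ∈ Icc 0 β ∧ h x ∈ Ioc 0 s ∧ HasJetScale n K f x (A x) (h x)) ∧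
        ∫⁻ x in Dr ρ, ENNReal.ofReal ((A x / h x ^ n) ^ 2) ≤
          ENNReal.ofReal (K * s ^ 2) * ∫⁻ x in Dr ρ, ENNReal.ofReal (jetDensity n s f x ^ 2) := by
  obtain ⟨K, hK, hscale⟩ := exists_hasJetScale E n
  refine ⟨K + K ^ 2 * (16 * (n + 1) ^ 2), by positivity, fun f ρ β s hβ hs hsρ hf hfβ => ?_⟩
  choose! b ε hseg A h hA hh hjet hAh using hscale f ρ β s hβ hs hsρ hf hfβ
  refine ⟨A, h, fun x hx => ⟨hA x hx, hh x hx, fun j hj => (hjet x hx j hj).trans ?_⟩, ?_⟩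
  · have hA0 := (hA x hx).1
    have hh0 := (hh x hx).1
    gcongr
    exact le_add_of_nonneg_right (by positivity)
  have hbound := lintegral_sq_le_of_le_sum_intervalIntegral (μ := volume) (S := 2 * s)
    (F := fun x => A x / h x ^ n) (g := fun y => K * jetDensity n s f y) (isOpen_Dr ρ).measurableSet
    (continuousOn_const.mul (continuousOn_jetDensity n s hf)) (by positivity)
    (fun (c : Fin 2 × ℤˣ) k => coneDir n c.1 c.2 k) fun x hx => ⟨(b x, ε x), hseg x hx, by
      have hA0 := (hA x hx).1
      have hh0 := (hh x hx).1
      simp only [intervalIntegral.integral_const_mul, ← Finset.mul_sum]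
      rw [abs_of_nonneg (by positivity)]
      exact hAh x hx⟩
  calc _ ≤ _ := hbound
    _ = ENNReal.ofReal (K ^ 2 * (16 * (n + 1) ^ 2) * s ^ 2) *
        ∫⁻ x in Dr ρ, ENNReal.ofReal (jetDensity n s f x ^ 2) := by
        simp_rw [mul_pow, ENNReal.ofReal_mul (sq_nonneg K)]
        rw [lintegral_const_mul' _ _ ENNReal.ofReal_ne_top, ← mul_assoc,
          ← ENNReal.ofReal_mul (by positivity)]
        congr 2
        simp
        ring
    _ ≤ _ := by
        gcongr
        exact le_add_of_nonneg_left hK.le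

end Interpolation

section DifferentialPolynomials

open Filter Topology

variable {m : ℕ} {u : (Fin 2 → ℝ) → Fin m → ℝ} {x : Fin 2 → ℝ}

/-- Smoothness in a neighbourhood of `x`; `ContDiffAt ℝ ∞ u x` alone only provides, for each finite
order, a neighbourhood depending on that order. -/
def SmoothNear (u : (Fin 2 → ℝ) → Fin m → ℝ) (x : Fin 2 → ℝ) : Prop :=
  ∀ᶠ y in 𝓝 x, ContDiffAt ℝ ∞ u y

lemma smoothNear_of_contDiffOn {r : ℝ} (hu : ContDiffOn ℝ ∞ u (Dr r)) (hx : x ∈ Dr r) :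
    SmoothNear u x := by
  filter_upwards [(isOpen_Dr r).mem_nhds hx] with y hy
  exact hu.contDiffAt ((isOpen_Dr r).mem_nhds hy)

namespace SmoothNear

lemma contDiffAt_pdIter (hu : SmoothNear u x) (l : ℕ) (I : Fin l → Fin 2) :
    ContDiffAt ℝ ∞ (fun y => pdIter u l y I) x := by
  induction l with
  | zero => exact hu.self_of_nhds
  | succ l ih => exact ((ih (Fin.tail I)).fderiv_right (by simp)).clm_apply contDiffAt_const

lemma fderiv_pdIter_apply (hu : SmoothNear u x) (l : ℕ) (I : Fin l → Fin 2) (i : Fin 2)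
    (a : Fin m) : fderiv ℝ (fun y => pdIter u l y I a) x (Pi.single i 1) =
      pdIter u (l + 1) x (Fin.cons i I) a := by
  have hd : DifferentiableAt ℝ (fun y => pdIter u l y I) x :=
    (hu.contDiffAt_pdIter l I).differentiableAt (by simp)
  rw [(hasFDerivAt_pi'.mp hd.hasFDerivAt a).fderiv]
  rfl

lemma pdIter_eq (hu : SmoothNear u x) (l : ℕ) (I : Fin l → Fin 2) :
    pdIter u l x I = iteratedFDeriv ℝ l u x fun s => Pi.single (I s) 1 := by
  induction l generalizing x with
  | zero => rfl
  | succ l ih =>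
    have hnear : (fun y => pdIter u l y (Fin.tail I)) =ᶠ[𝓝 x]
        fun y => iteratedFDeriv ℝ l u y fun s => Pi.single (Fin.tail I s) 1 :=
      (Eventually.eventually_nhds hu).mono fun y hy => ih hy (Fin.tail I)
    rw [iteratedFDeriv_succ_apply_of_contDiffAt (hu.self_of_nhds.of_le (mod_cast le_top))]
    exact DFunLike.congr_fun hnear.fderiv_eq (Pi.single (I 0) 1)

end SmoothNear

/-- Smoothness near `x` together with the bound `α` for the first partial derivatives at `x`. -/
structure SmoothGradLE (α : ℝ) (u : (Fin 2 → ℝ) → Fin m → ℝ) (x : Fin 2 → ℝ) : Prop where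
  smooth : SmoothNear u x
  abs_le : ∀ I a, |pdIter u 1 x I a| ≤ α

/-- Nonlinear operators sending a map `u` to a real function. -/
abbrev ScalarOperator (m : ℕ) := ((Fin 2 → ℝ) → Fin m → ℝ) → (Fin 2 → ℝ) → ℝ

/-- Polynomial expressions in the derivatives of order at least two of `u`, with coefficients that
are functions of `Du`. A factor `D^{j+2}u` has weight `j + 1`; every term of `DiffPoly w n` has
weight `w` and at least `n` factors of order at least two. -/
inductive DiffPoly : ℕ → ℕ → ScalarOperator m → Prop
  | zero {w n : ℕ} (h : n ≤ w) : DiffPoly w n fun _ _ => 0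
  | const (c : ℝ) : DiffPoly 0 0 fun _ _ => c
  | gradient (I : Fin 1 → Fin 2) (a : Fin m) : DiffPoly 0 0 fun u x => pdIter u 1 x I a
  | higher (j : ℕ) (I : Fin (j + 2) → Fin 2) (a : Fin m) :
      DiffPoly (j + 1) 1 fun u x => pdIter u (j + 2) x I a
  | add {w n : ℕ} {P Q : ScalarOperator m} :
      DiffPoly w n P → DiffPoly w n Q → DiffPoly w n fun u x => P u x + Q u x
  | mul {w w' n n' : ℕ} {P Q : ScalarOperator m} :
      DiffPoly w n P → DiffPoly w' n' Q → DiffPoly (w + w') (n + n') fun u x => P u x * Q u x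
  | inv {P : ScalarOperator m} :
      DiffPoly 0 0 P → (∀ u x, SmoothNear u x → 1 ≤ P u x) → DiffPoly 0 0 fun u x => (P u x)⁻¹
  | weaken {w n : ℕ} {P : ScalarOperator m} : DiffPoly w (n + 1) P → DiffPoly w n P
  | congr {w n : ℕ} {P Q : ScalarOperator m} :
      DiffPoly w n P → (∀ u x, SmoothNear u x → Q u x = P u x) → DiffPoly w n Q

namespace DiffPoly

variable {w n : ℕ} {P Q : ScalarOperator m}

lemma le (h : DiffPoly w n P) : n ≤ w := by
  induction h <;> omega

lemma of_le {n' : ℕ} (h : DiffPoly w n P) (hn : n' ≤ n) : DiffPoly w n' P := by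
  induction n, hn using Nat.le_induction with
  | base => exact h
  | succ k _ ih => exact ih h.weaken

lemma mul_of_eq_of_le {w₁ w₂ n₁ n₂ : ℕ} (hP : DiffPoly w₁ n₁ P) (hQ : DiffPoly w₂ n₂ Q)
    (hw : w = w₁ + w₂) (hn : n ≤ n₁ + n₂) : DiffPoly w n fun u x => P u x * Q u x := by
  subst hw
  exact (hP.mul hQ).of_le hn

lemma coeff_mul (hP : DiffPoly 0 0 P) (hQ : DiffPoly w n Q) :
    DiffPoly w n fun u x => P u x * Q u x :=
  hP.mul_of_eq_of_le hQ (by omega) (by omega)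

lemma sum {ι : Type*} {s : Finset ι} {P : ι → ScalarOperator m} (hnw : n ≤ w)
    (h : ∀ k, DiffPoly w n (P k)) : DiffPoly w n fun u x => ∑ k ∈ s, P k u x := by
  classical
  induction s using Finset.induction_on with
  | empty => exact zero hnw
  | insert a s ha ih => exact ((h a).add ih).congr fun _ _ _ => Finset.sum_insert ha

lemma neg (h : DiffPoly w n P) : DiffPoly w n fun u x => -P u x :=
  ((const (-1)).coeff_mul h).congr fun _ _ _ => (neg_one_mul _).symm

lemma sub (hP : DiffPoly w n P) (hQ : DiffPoly w n Q) : DiffPoly w n fun u x => P u x - Q u x :=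
  (hP.add hQ.neg).congr fun _ _ _ => sub_eq_add_neg _ _

lemma contDiffAt (h : DiffPoly w n P) (hu : SmoothNear u x) : ContDiffAt ℝ ∞ (P u) x := by
  induction h with
  | zero | const => exact contDiffAt_const
  | gradient I a => exact contDiffAt_pi.mp (hu.contDiffAt_pdIter 1 I) a
  | higher j I a => exact contDiffAt_pi.mp (hu.contDiffAt_pdIter (j + 2) I) a
  | add _ _ ihP ihQ => exact ihP.add ihQ
  | mul _ _ ihP ihQ => exact ihP.mul ihQ
  | inv _ hone ih => exact ih.inv (zero_lt_one.trans_le (hone u x hu)).ne'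
  | weaken _ ih => exact ih
  | congr _ hPQ ih =>
    exact ih.congr_of_eventuallyEq ((Eventually.eventually_nhds hu).mono fun y hy => hPQ u y hy)

lemma differentiableAt (h : DiffPoly w n P) (hu : SmoothNear u x) : DifferentiableAt ℝ (P u) x :=
  (h.contDiffAt hu).differentiableAt (by simp)

lemma continuousOn (h : DiffPoly w n P) {Ω : Set (Fin 2 → ℝ)} (hu : ∀ x ∈ Ω, SmoothNear u x) :
    ContinuousOn (P u) Ω :=
  fun x hx => (h.contDiffAt (hu x hx)).continuousAt.continuousWithinAt

lemma fderiv_single (h : DiffPoly w n P) (i : Fin 2) :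
    DiffPoly (w + 1) (max n 1) fun u x => fderiv ℝ (P u) x (Pi.single i 1) := by
  induction h with
  | zero h => exact (zero (by omega)).congr fun u x _ => by simp
  | const c => exact (zero (by omega)).congr fun u x _ => by simp
  | gradient I a =>
    exact (higher 0 (Fin.cons i I) a).congr fun u x hu => hu.fderiv_pdIter_apply 1 I i a
  | higher j I a =>
    exact (higher (j + 1) (Fin.cons i I) a).congr fun u x hu => hu.fderiv_pdIter_apply (j + 2) I i a
  | add hP hQ ihP ihQ =>
    refine (ihP.add ihQ).congr fun u x hu => ?_
    rw [fderiv_fun_add (hP.differentiableAt hu) (hQ.differentiableAt hu)]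
    rfl
  | mul hP hQ ihP ihQ =>
    refine ((hP.mul_of_eq_of_le ihQ (by ring) (by omega)).add
      (hQ.mul_of_eq_of_le ihP (by ring) (by omega))).congr fun u x hu => ?_
    rw [fderiv_fun_mul (hP.differentiableAt hu) (hQ.differentiableAt hu)]
    rfl
  | inv hP hone ih =>
    refine ((hP.inv hone).coeff_mul ((hP.inv hone).coeff_mul ih)).neg.congr fun u x hu => ?_
    have hinv := (hasDerivAt_inv (zero_lt_one.trans_le (hone u x hu)).ne').comp_hasFDerivAt x
      (hP.differentiableAt hu).hasFDerivAt
    rw [show fderiv ℝ (fun y => (_ : ℝ)⁻¹) x = _ from hinv.fderiv]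
    simp [sq, mul_assoc]
  | weaken _ ih => exact ih.of_le (by omega)
  | congr _ hPQ ih =>
    refine ih.congr fun u x hu => ?_
    rw [EventuallyEq.fderiv_eq ((Eventually.eventually_nhds hu).mono fun y hy => hPQ u y hy)]

lemma mul_pow_succ_div_pow_le {A t β : ℝ} (hA : A ∈ Icc 0 β) (ht : t ∈ Ioc 0 1) (n w : ℕ) :
    (A * t) ^ (n + 1) / t ^ w ≤ β * ((A * t) ^ n / t ^ w) := by
  have hAt : A * t ≤ β := (mul_le_of_le_one_right hA.1 ht.2).trans hA.2
  have := mul_nonneg hA.1 ht.1.le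
  have := ht.1
  rw [pow_succ', mul_div_assoc]
  gcongr

lemma exists_abs_le (h : DiffPoly w n P) {α β K : ℝ} (hα : 0 ≤ α) (hβ : 0 ≤ β) (hK : 0 ≤ K) :
    ∃ C ≥ (0 : ℝ), ∀ u x, SmoothGradLE α u x → ∀ A ∈ Icc 0 β, ∀ t ∈ Ioc (0 : ℝ) 1,
      (∀ j, j + max n 1 ≤ w → ∀ I a, |pdIter u (j + 2) x I a| ≤ K * (A / t ^ j)) →
      |P u x| ≤ C * ((A * t) ^ n / t ^ w) := by
  induction h with
  | zero => exact ⟨0, le_rfl, by simp⟩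
  | const c => exact ⟨|c|, abs_nonneg c, by simp⟩
  | gradient I a => exact ⟨α, hα, fun u x hu A _ t _ _ => by simpa using hu.abs_le I a⟩
  | higher j I a =>
    refine ⟨K, hK, fun u x _ A _ t ht hj => (hj j (by simp) I a).trans_eq ?_⟩
    have := ht.1
    field_simp
    ring
  | add _ _ ihP ihQ =>
    obtain ⟨C, hC, hPC⟩ := ihP
    obtain ⟨D, hD, hQD⟩ := ihQ
    refine ⟨C + D, by positivity, fun u x hu A hA t ht hj => (abs_add_le _ _).trans ?_⟩
    rw [add_mul]
    exact add_le_add (hPC u x hu A hA t ht hj) (hQD u x hu A hA t ht hj)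
  | @mul w₁ w₂ n₁ n₂ P Q hP hQ ihP ihQ =>
    obtain ⟨C, hC, hPC⟩ := ihP
    obtain ⟨D, hD, hQD⟩ := ihQ
    refine ⟨C * D, by positivity, fun u x hu A hA t ht hj => ?_⟩
    have hPle := hPC u x hu A hA t ht fun j hj' => hj j (by have := hQ.le; omega)
    have hQle := hQD u x hu A hA t ht fun j hj' => hj j (by have := hP.le; omega)
    calc |P u x * Q u x| = |P u x| * |Q u x| := abs_mul _ _
      _ ≤ C * ((A * t) ^ n₁ / t ^ w₁) * (D * ((A * t) ^ n₂ / t ^ w₂)) := by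
        gcongr
        exact (abs_nonneg _).trans hPle
      _ = _ := by rw [pow_add, pow_add]; ring
  | inv _ hone _ =>
    refine ⟨1, zero_le_one, fun u x hu A _ t _ _ => ?_⟩
    rw [abs_of_pos (inv_pos.2 (zero_lt_one.trans_le (hone u x hu.smooth)))]
    simpa using inv_le_one_of_one_le₀ (hone u x hu.smooth)
  | @weaken w n _ _ ih =>
    obtain ⟨C, hC, hPC⟩ := ih
    refine ⟨C * β, by positivity, fun u x hu A hA t ht hj =>
      (hPC u x hu A hA t ht fun j hj' => hj j (by omega)).trans ?_⟩
    rw [mul_assoc]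
    exact mul_le_mul_of_nonneg_left (mul_pow_succ_div_pow_le hA ht n w) hC
  | congr _ hPQ ih =>
    obtain ⟨C, hC, hPC⟩ := ih
    refine ⟨C, hC, fun u x hu A hA t ht hj => ?_⟩
    rw [hPQ u x hu.smooth]
    exact hPC u x hu A hA t ht hj

lemma exists_forall_abs_coeff_le {ι : Type*} [Finite ι] {P : ι → ScalarOperator m}
    (h : ∀ k, DiffPoly 0 0 (P k)) {α : ℝ} (hα : 0 ≤ α) :
    ∃ C ≥ (1 : ℝ), ∀ u x, SmoothGradLE α u x → ∀ k, |P k u x| ≤ C := by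
  choose C _ hPC using fun k => (h k).exists_abs_le hα zero_le_one zero_le_one
  obtain ⟨M, hM⟩ := (Set.finite_range C).bddAbove
  refine ⟨max M 1, le_max_right _ _, fun u x hu k => ?_⟩
  have hk := hPC k u x hu 0 (by simp) 1 (by simp) (by simp)
  exact (by simpa using hk : |P k u x| ≤ C k).trans
    ((hM (Set.mem_range_self k)).trans (le_max_left _ _))

end DiffPoly
end DifferentialPolynomials

section TensorNorm

variable {ι κ ν ξ : Type*} [Fintype ι] [DecidableEq ι] [Fintype κ] [Fintype ν]

open Matrix

/-- The action of the tensor power of a matrix on the components of a tensor with slots `ι`. -/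
def tensorMap (M : Matrix ν κ ℝ) (t : (ι → κ) → ℝ) (K : ι → ν) : ℝ :=
  ∑ I, (∏ s, M (K s) (I s)) * t I

/-- The squared norm of a covariant tensor, given by its components, when `H` is the matrix of the
inner product on covectors (the inverse of the metric). -/
def tensorNormSq (H : Matrix κ κ ℝ) (t : (ι → κ) → ℝ) : ℝ :=
  ∑ I, ∑ J, (∏ s, H (I s) (J s)) * (t I * t J)

lemma tensorMap_one [DecidableEq κ] (t : (ι → κ) → ℝ) : tensorMap 1 t = t := by
  ext K
  have hprod (I : ι → κ) : ∏ s, (1 : Matrix κ κ ℝ) (K s) (I s) = if K = I then 1 else 0 := by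
    simp [Matrix.one_apply, Finset.prod_ite_zero, funext_iff]
  simp [tensorMap, hprod]

lemma tensorMap_mul (M : Matrix ξ ν ℝ) (N : Matrix ν κ ℝ) (t : (ι → κ) → ℝ) :
    tensorMap (M * N) t = tensorMap M (tensorMap N t) := by
  ext K
  simp only [tensorMap, Matrix.mul_apply, Fintype.prod_sum, Finset.prod_mul_distrib,
    Finset.sum_mul, Finset.mul_sum, mul_assoc]
  exact Finset.sum_comm

lemma tensorNormSq_transpose_mul_self (E : Matrix ν κ ℝ) (t : (ι → κ) → ℝ) :
    tensorNormSq (Eᵀ * E) t = ∑ K, tensorMap E t K ^ 2 := by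
  have hprod (I J : ι → κ) : ∏ s, (Eᵀ * E) (I s) (J s) =
      ∑ K : ι → ν, (∏ s, E (K s) (I s)) * ∏ s, E (K s) (J s) := by
    simp only [Matrix.mul_apply, Matrix.transpose_apply, Fintype.prod_sum, Finset.prod_mul_distrib]
  simp only [tensorNormSq, hprod, tensorMap, sq, Finset.sum_mul_sum]
  simp only [Finset.sum_mul]
  conv_rhs => rw [Finset.sum_comm]
  refine Finset.sum_congr rfl fun I _ => ?_
  rw [Finset.sum_comm]
  exact Finset.sum_congr rfl fun J _ => Finset.sum_congr rfl fun K _ => by ring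

lemma tensorNormSq_nonneg (E : Matrix ν κ ℝ) (t : (ι → κ) → ℝ) :
    0 ≤ tensorNormSq (Eᵀ * E) t := by
  rw [tensorNormSq_transpose_mul_self]
  exact Finset.sum_nonneg fun _ _ => sq_nonneg _

lemma sq_le_mul_tensorNormSq [DecidableEq κ] {E : Matrix ν κ ℝ}
    {P : Matrix κ ν ℝ} (hPE : P * E = 1) (t : (ι → κ) → ℝ) (K : ι → κ) :
    t K ^ 2 ≤ (∏ s, (P * Pᵀ) (K s) (K s)) * tensorNormSq (Eᵀ * E) t := by
  have ht : t K = ∑ L, (∏ s, P (K s) (L s)) * tensorMap E t L := by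
    rw [← tensorMap, ← tensorMap_mul, hPE, tensorMap_one]
  have hP : ∏ s, (P * Pᵀ) (K s) (K s) = ∑ L : ι → ν, (∏ s, P (K s) (L s)) ^ 2 := by
    simp only [Matrix.mul_apply, Matrix.transpose_apply, ← sq, Fintype.prod_sum, Finset.prod_pow]
  rw [ht, hP, tensorNormSq_transpose_mul_self]
  exact Finset.sum_mul_sq_le_sq_mul_sq _ _ _

lemma tensorNormSq_le {H : Matrix κ κ ℝ} {c : ℝ} (hc : 0 ≤ c) (hH : ∀ i j, |H i j| ≤ c)
    (t : (ι → κ) → ℝ) :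
    tensorNormSq H t ≤ c ^ Fintype.card ι * Fintype.card (ι → κ) * ∑ I, t I ^ 2 := by
  have hprod (I J : ι → κ) : |∏ s, H (I s) (J s)| ≤ c ^ Fintype.card ι := by
    rw [Finset.abs_prod]
    exact (Finset.prod_le_prod (fun _ _ => abs_nonneg _) fun s _ => hH (I s) (J s)).trans_eq
      (by simp)
  have hterm (I J : ι → κ) : (∏ s, H (I s) (J s)) * (t I * t J) ≤
      c ^ Fintype.card ι * (|t I| * |t J|) := by
    refine (le_abs_self _).trans ?_
    rw [abs_mul, abs_mul]
    gcongr
    exact hprod I J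
  calc tensorNormSq H t ≤ ∑ I, ∑ J, c ^ Fintype.card ι * (|t I| * |t J|) :=
        Finset.sum_le_sum fun I _ => Finset.sum_le_sum fun J _ => hterm I J
    _ = c ^ Fintype.card ι * (∑ I, |t I|) ^ 2 := by
      simp only [← Finset.mul_sum, sq, Finset.sum_mul_sum]
    _ ≤ c ^ Fintype.card ι * (Fintype.card (ι → κ) * ∑ I, t I ^ 2) := by
      gcongr
      simpa only [sq_abs, Finset.card_univ] using
        sq_sum_le_card_mul_sum_sq (s := Finset.univ) (f := fun I => |t I|)
    _ = _ := (mul_assoc _ _ _).symm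

lemma sum_mulVec_sq_le {M : Matrix ν κ ℝ} {c : ℝ} (hM : ∀ i j, |M i j| ≤ c) (v : κ → ℝ) :
    ∑ i, (M *ᵥ v) i ^ 2 ≤ Fintype.card ν * (Fintype.card κ * c ^ 2) * ∑ j, v j ^ 2 := by
  have hrow (i : ν) : (M *ᵥ v) i ^ 2 ≤ Fintype.card κ * c ^ 2 * ∑ j, v j ^ 2 := by
    refine (Finset.sum_mul_sq_le_sq_mul_sq _ _ _).trans ?_
    gcongr
    have hsum := Finset.sum_le_card_nsmul Finset.univ (fun j => M i j ^ 2) (c ^ 2)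
      fun j _ => sq_le_sq.2 ((hM i j).trans (le_abs_self c))
    simpa using hsum
  calc _ ≤ ∑ _i : ν, Fintype.card κ * c ^ 2 * ∑ j, v j ^ 2 := Finset.sum_le_sum fun i _ => hrow i
    _ = _ := by simp [mul_assoc]

end TensorNorm

section SecondFundamentalForm

open Matrix Topology Filter

variable {m : ℕ} {u : (Fin 2 → ℝ) → Fin m → ℝ} {x : Fin 2 → ℝ}

lemma SmoothNear.pdIter_two_swap (hu : SmoothNear u x) (i j : Fin 2) :
    pdIter u 2 x ![i, j] = pdIter u 2 x ![j, i] := by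
  have hsymm : IsSymmSndFDerivAt ℝ u x :=
    hu.self_of_nhds.isSymmSndFDerivAt (by simpa using ENat.LEInfty.out)
  simp only [hu.pdIter_eq, iteratedFDeriv_two_apply]
  exact hsymm _ _

lemma pd_apply {f : (Fin 2 → ℝ) → Fin 2 ⊕ Fin m → ℝ} (hf : DifferentiableAt ℝ f x) (i : Fin 2)
    (B : Fin 2 ⊕ Fin m) : pd f i x B = fderiv ℝ (fun y => f y B) x (Pi.single i 1) := by
  rw [(hasFDerivAt_pi'.mp hf.hasFDerivAt B).fderiv]
  rfl

lemma differentiableAt_gr (hu : DifferentiableAt ℝ u x) : DifferentiableAt ℝ (gr u) x := by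
  rw [differentiableAt_pi]
  rintro (i | a)
  · exact differentiableAt_apply i x
  · exact differentiableAt_pi.mp hu a

lemma pd_gr_inl (hu : DifferentiableAt ℝ u x) (k i : Fin 2) :
    pd (gr u) k x (Sum.inl i) = (Pi.single k 1 : Fin 2 → ℝ) i := by
  rw [pd_apply (differentiableAt_gr hu)]
  exact DFunLike.congr_fun
    (ContinuousLinearMap.proj (R := ℝ) (φ := fun _ : Fin 2 => ℝ) i).hasFDerivAt.fderiv _

lemma pd_gr_inr (hu : DifferentiableAt ℝ u x) (k : Fin 2) (a : Fin m) :
    pd (gr u) k x (Sum.inr a) = pdIter u 1 x (fun _ => k) a := by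
  rw [pd_apply (differentiableAt_gr hu)]
  simp only [gr, Sum.elim_inr, pdIter, (hasFDerivAt_pi'.mp hu.hasFDerivAt a).fderiv]
  rfl

lemma SmoothNear.differentiableAt (hu : SmoothNear u x) : DifferentiableAt ℝ u x :=
  hu.self_of_nhds.differentiableAt (by simp)

namespace DiffPoly

lemma pd_gr (k : Fin 2) (B : Fin 2 ⊕ Fin m) : DiffPoly 0 0 fun u x => pd (gr u) k x B := by
  rcases B with i | a
  · exact (const _).congr fun u x hu => pd_gr_inl hu.differentiableAt k i
  · exact (gradient _ a).congr fun u x hu => pd_gr_inr hu.differentiableAt k a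

lemma gmet_gr (i j : Fin 2) : DiffPoly (m := m) 0 0 fun u x => gmet (gr u) x i j :=
  sum (s := Finset.univ) le_rfl fun B => (pd_gr i B).coeff_mul (pd_gr j B)

lemma det_gmet_gr : DiffPoly (m := m) 0 0 fun u x => (gmet (gr u) x).det :=
  (((gmet_gr 0 0).coeff_mul (gmet_gr 1 1)).sub ((gmet_gr 0 1).coeff_mul (gmet_gr 1 0))).congr
    fun _ _ _ => Matrix.det_fin_two _

end DiffPoly

/-- The Jacobian of `F`, with the tangent vectors `∂ᵢF` as rows. -/
def tangentMatrix (F : (Fin 2 → ℝ) → Fin 2 ⊕ Fin m → ℝ) (x : Fin 2 → ℝ) :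
    Matrix (Fin 2) (Fin 2 ⊕ Fin m) ℝ :=
  Matrix.of fun i => pd F i x

/-- The matrix of the projection `nproj` onto the normal space. -/
def normalMatrix (F : (Fin 2 → ℝ) → Fin 2 ⊕ Fin m → ℝ) (x : Fin 2 → ℝ) :
    Matrix (Fin 2 ⊕ Fin m) (Fin 2 ⊕ Fin m) ℝ :=
  1 - (tangentMatrix F x)ᵀ * (gmet F x)⁻¹ * tangentMatrix F x

section Immersion

variable (F : (Fin 2 → ℝ) → Fin 2 ⊕ Fin m → ℝ) (x : Fin 2 → ℝ)

lemma gmet_eq_mul_transpose : gmet F x = tangentMatrix F x * (tangentMatrix F x)ᵀ := rfl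

lemma transpose_gmet : (gmet F x)ᵀ = gmet F x := by
  rw [gmet_eq_mul_transpose, Matrix.transpose_mul, Matrix.transpose_transpose]

lemma nproj_eq_mulVec (v : Fin 2 ⊕ Fin m → ℝ) : nproj F x v = normalMatrix F x *ᵥ v := by
  rw [normalMatrix, Matrix.sub_mulVec, Matrix.one_mulVec, Matrix.mul_assoc, ← Matrix.mulVec_mulVec,
    ← Matrix.mulVec_mulVec, nproj]
  congr 1
  ext B
  simp only [Finset.sum_apply, Pi.smul_apply, smul_eq_mul, Matrix.mulVec, dotProduct,
    Matrix.transpose_apply, tangentMatrix, Matrix.of_apply, dotA, Finset.mul_sum, Finset.sum_mul]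
  exact Finset.sum_congr rfl fun k _ => Finset.sum_congr rfl fun l _ =>
    Finset.sum_congr rfl fun C _ => by ring

variable {F x}

lemma tangentMatrix_mul_normalMatrix (hdet : IsUnit (gmet F x).det) :
    tangentMatrix F x * normalMatrix F x = 0 := by
  rw [normalMatrix, Matrix.mul_sub, Matrix.mul_one, ← Matrix.mul_assoc, ← Matrix.mul_assoc,
    ← gmet_eq_mul_transpose, Matrix.mul_nonsing_inv _ hdet, Matrix.one_mul, sub_self]

lemma normalMatrix_mul_self (hdet : IsUnit (gmet F x).det) :
    normalMatrix F x * normalMatrix F x = normalMatrix F x := by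
  conv_lhs => enter [1]; rw [normalMatrix]
  rw [Matrix.sub_mul, Matrix.one_mul, Matrix.mul_assoc, tangentMatrix_mul_normalMatrix hdet,
    Matrix.mul_zero, sub_zero]

lemma nCov2_eq_sum_tensorNormSq (l : ℕ) :
    nCov2 F l x = ∑ B, tensorNormSq (gmet F x)⁻¹ fun I => covIter F l x I B := by
  simp only [nCov2, tensorNormSq, dotA, Finset.mul_sum]
  rw [Finset.sum_comm_cycle]

lemma inv_gmet_eq_transpose_mul_self (hdet : IsUnit (gmet F x).det) :
    (gmet F x)⁻¹ =
      ((tangentMatrix F x)ᵀ * (gmet F x)⁻¹)ᵀ * ((tangentMatrix F x)ᵀ * (gmet F x)⁻¹) := by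
  rw [Matrix.transpose_mul, Matrix.transpose_transpose, Matrix.transpose_nonsing_inv,
    transpose_gmet, Matrix.mul_assoc, ← Matrix.mul_assoc (tangentMatrix F x),
    ← gmet_eq_mul_transpose, Matrix.mul_nonsing_inv _ hdet, Matrix.mul_one]

lemma nCov2_nonneg (hdet : IsUnit (gmet F x).det) (l : ℕ) : 0 ≤ nCov2 F l x := by
  rw [nCov2_eq_sum_tensorNormSq, inv_gmet_eq_transpose_mul_self hdet]
  exact Finset.sum_nonneg fun B _ => tensorNormSq_nonneg _ _

lemma sum_covIter_sq_le (hdet : IsUnit (gmet F x).det) (l : ℕ) (K : Fin (l + 2) → Fin 2) :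
    ∑ B, covIter F l x K B ^ 2 ≤ (∏ s, gmet F x (K s) (K s)) * nCov2 F l x := by
  have hdual : tangentMatrix F x * ((tangentMatrix F x)ᵀ * (gmet F x)⁻¹) = 1 := by
    rw [← Matrix.mul_assoc, ← gmet_eq_mul_transpose, Matrix.mul_nonsing_inv _ hdet]
  rw [nCov2_eq_sum_tensorNormSq, inv_gmet_eq_transpose_mul_self hdet, Finset.mul_sum]
  exact Finset.sum_le_sum fun B _ => sq_le_mul_tensorNormSq hdual (fun I => covIter F l x I B) K

end Immersion

lemma gmet_gr_eq (hu : DifferentiableAt ℝ u x) (i j : Fin 2) :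
    gmet (gr u) x i j = (1 : Matrix (Fin 2) (Fin 2) ℝ) i j +
      ∑ a, pdIter u 1 x (fun _ => i) a * pdIter u 1 x (fun _ => j) a := by
  simp only [gmet, Matrix.of_apply, dotA, Fintype.sum_sum_type, pd_gr_inl hu, pd_gr_inr hu]
  simp [Pi.single_apply, Matrix.one_apply, eq_comm]

lemma one_le_det_gmet_gr (hu : DifferentiableAt ℝ u x) : 1 ≤ (gmet (gr u) x).det := by
  have hCS := Finset.sum_mul_sq_le_sq_mul_sq Finset.univ
    (pdIter u 1 x fun _ => 0) (pdIter u 1 x fun _ => 1)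
  have hnonneg (i : Fin 2) : 0 ≤ ∑ a, pdIter u 1 x (fun _ => i) a ^ 2 :=
    Finset.sum_nonneg fun _ _ => sq_nonneg _
  rw [Matrix.det_fin_two]
  simp only [gmet_gr_eq hu, mul_comm (pdIter u 1 x (fun _ => 1) _) (pdIter u 1 x (fun _ => 0) _),
    ← sq, Matrix.one_apply_eq, ne_eq, zero_ne_one, one_ne_zero, not_false_eq_true,
    Matrix.one_apply_ne, zero_add]
  nlinarith [hnonneg 0, hnonneg 1]

lemma isUnit_det_gmet_gr (hu : DifferentiableAt ℝ u x) : IsUnit (gmet (gr u) x).det :=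
  isUnit_iff_ne_zero.2 (zero_lt_one.trans_le (one_le_det_gmet_gr hu)).ne'

namespace DiffPoly

lemma inv_gmet_gr (i j : Fin 2) : DiffPoly (m := m) 0 0 fun u x => (gmet (gr u) x)⁻¹ i j := by
  have hadj : DiffPoly (m := m) 0 0 fun u x => (gmet (gr u) x).adjugate i j := by
    simp only [Matrix.adjugate_fin_two]
    fin_cases i <;> fin_cases j
    exacts [gmet_gr _ _, (gmet_gr _ _).neg, (gmet_gr _ _).neg, gmet_gr _ _]
  refine ((det_gmet_gr.inv fun u x hu => one_le_det_gmet_gr hu.differentiableAt).coeff_mul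
    hadj).congr fun u x _ => ?_
  rw [Matrix.inv_def, Ring.inverse_eq_inv']
  rfl

lemma normalMatrix_gr (B C : Fin 2 ⊕ Fin m) :
    DiffPoly 0 0 fun u x => normalMatrix (gr u) x B C :=
  (const _).sub (sum (s := Finset.univ) le_rfl fun l =>
    (sum (s := Finset.univ) le_rfl fun k => (pd_gr k B).coeff_mul (inv_gmet_gr k l)).coeff_mul
      (pd_gr l C))

lemma differentiableAt_pd_gr (hu : SmoothNear u x) (i : Fin 2) :
    DifferentiableAt ℝ (pd (gr u) i) x :=
  differentiableAt_pi.mpr fun B => (pd_gr i B).differentiableAt hu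

lemma pd_pd_gr (i j : Fin 2) (B : Fin 2 ⊕ Fin m) :
    DiffPoly 1 1 fun u x => pd (pd (gr u) i) j x B :=
  ((pd_gr i B).fderiv_single j).congr fun _ _ hu => pd_apply (differentiableAt_pd_gr hu i) j B

lemma chr_gr (i j k : Fin 2) : DiffPoly (m := m) 1 1 fun u x => chr (gr u) i j k x :=
  sum le_rfl fun l => (inv_gmet_gr k l).coeff_mul
    (sum le_rfl fun B => (pd_pd_gr i j B).mul_of_eq_of_le (pd_gr l B) rfl le_rfl)

end DiffPoly

lemma pd_pd_gr (hu : SmoothNear u x) (i j : Fin 2) :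
    pd (pd (gr u) i) j x = Sum.elim (0 : Fin 2 → ℝ) (pdIter u 2 x ![i, j]) := by
  ext B
  rw [pd_apply (DiffPoly.differentiableAt_pd_gr hu i)]
  rcases B with k | a
  · rw [EventuallyEq.fderiv_eq (hu.mono fun y hy =>
      pd_gr_inl (hy.differentiableAt (by simp)) i k)]
    simp
  · rw [EventuallyEq.fderiv_eq (hu.mono fun y hy =>
      pd_gr_inr (hy.differentiableAt (by simp)) i a), hu.fderiv_pdIter_apply, hu.pdIter_two_swap]
    rfl

end SecondFundamentalForm

section CovariantRemainder

open Matrix Topology Filter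

variable {m : ℕ} {u : (Fin 2 → ℝ) → Fin m → ℝ} {x : Fin 2 → ℝ}

/-- The lower order part of `∇ˡA`: its difference to the normal projection of `D^{l+2}u`. -/
def covRemainder (u : (Fin 2 → ℝ) → Fin m → ℝ) (l : ℕ) (x : Fin 2 → ℝ) (I : Fin (l + 2) → Fin 2) :
    Fin 2 ⊕ Fin m → ℝ :=
  covIter (gr u) l x I -
    normalMatrix (gr u) x *ᵥ Sum.elim (0 : Fin 2 → ℝ) (pdIter u (l + 2) x I)

lemma covIter_gr (l : ℕ) (I : Fin (l + 2) → Fin 2) : covIter (gr u) l x I =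
    normalMatrix (gr u) x *ᵥ Sum.elim (0 : Fin 2 → ℝ) (pdIter u (l + 2) x I) +
      covRemainder u l x I :=
  (add_sub_cancel _ _).symm

lemma mulVec_sumElim_zero_apply {ν : Type*} (M : Matrix ν (Fin 2 ⊕ Fin m) ℝ) (D : Fin m → ℝ)
    (B : ν) : (M *ᵥ Sum.elim (0 : Fin 2 → ℝ) D) B = ∑ a, M B (Sum.inr a) * D a := by
  simp [Matrix.mulVec, dotProduct, Fintype.sum_sum_type]

lemma covRemainder_zero (hu : SmoothNear u x) (I : Fin 2 → Fin 2) : covRemainder u 0 x I = 0 := by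
  have hI : ![I 0, I 1] = I := by
    ext s
    fin_cases s
    exacts [rfl, rfl]
  rw [covRemainder, covIter, sffT, nproj_eq_mulVec, pd_pd_gr hu, hI, sub_self]

namespace DiffPoly

lemma covIter_gr {l : ℕ} (hR : ∀ I B, DiffPoly (m := m) (l + 1) 1 fun u x => covRemainder u l x I B)
    (I : Fin (l + 2) → Fin 2) (B : Fin 2 ⊕ Fin m) :
    DiffPoly (l + 1) 1 fun u x => covIter (gr u) l x I B := by
  refine ((sum (s := Finset.univ) (by omega) fun a =>
    (normalMatrix_gr B (Sum.inr a)).coeff_mul (higher l I a)).add (hR I B)).congr fun u x _ => ?_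
  rw [Stmt18.covIter_gr, Pi.add_apply, mulVec_sumElim_zero_apply]

end DiffPoly

lemma pd_covIter_gr (hu : SmoothNear u x) {l : ℕ}
    (hR : ∀ I B, DiffPoly (m := m) (l + 1) 1 fun u x => covRemainder u l x I B) (i : Fin 2)
    (I : Fin (l + 2) → Fin 2) (C : Fin 2 ⊕ Fin m) :
    pd (fun y => covIter (gr u) l y I) i x C =
      (normalMatrix (gr u) x *ᵥ Sum.elim (0 : Fin 2 → ℝ) (pdIter u (l + 3) x (Fin.cons i I))) C +
      (∑ a, fderiv ℝ (fun y => normalMatrix (gr u) y C (Sum.inr a)) x (Pi.single i 1) *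
          pdIter u (l + 2) x I a +
        fderiv ℝ (fun y => covRemainder u l y I C) x (Pi.single i 1)) := by
  have hN (a : Fin m) := (DiffPoly.normalMatrix_gr C (Sum.inr a)).differentiableAt hu
  have hD (a : Fin m) := (DiffPoly.higher l I a).differentiableAt hu
  rw [pd_apply (differentiableAt_pi.2 fun B => (DiffPoly.covIter_gr hR I B).differentiableAt hu)]
  simp only [Stmt18.covIter_gr, Pi.add_apply, mulVec_sumElim_zero_apply]
  rw [fderiv_fun_add (.fun_sum fun a _ => (hN a).fun_mul (hD a)) ((hR I C).differentiableAt hu),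
    fderiv_fun_sum fun a _ => (hN a).fun_mul (hD a)]
  simp only [fderiv_fun_mul (hN _) (hD _), _root_.add_apply,
    _root_.sum_apply, _root_.smul_apply, smul_eq_mul,
    hu.fderiv_pdIter_apply, Finset.sum_add_distrib, mul_comm (pdIter u (l + 2) x I _), add_assoc]

lemma covRemainder_succ (hu : SmoothNear u x) {l : ℕ}
    (hR : ∀ I B, DiffPoly (m := m) (l + 1) 1 fun u x => covRemainder u l x I B)
    (I : Fin (l + 3) → Fin 2) (B : Fin 2 ⊕ Fin m) :
    covRemainder u (l + 1) x I B =
      ∑ C, normalMatrix (gr u) x B C *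
        (∑ a, fderiv ℝ (fun y => normalMatrix (gr u) y C (Sum.inr a)) x (Pi.single (I 0) 1) *
            pdIter u (l + 2) x (Fin.tail I) a +
          fderiv ℝ (fun y => covRemainder u l y (Fin.tail I) C) x (Pi.single (I 0) 1)) -
      ∑ s, ∑ k, chr (gr u) (I 0) (Fin.tail I s) k x *
        covIter (gr u) l x (Function.update (Fin.tail I) s k) B := by
  have hidem := normalMatrix_mul_self (isUnit_det_gmet_gr hu.differentiableAt)
  have hpd := funext (pd_covIter_gr hu hR (I 0) (Fin.tail I))
  rw [Fin.cons_self_tail] at hpd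
  rw [covRemainder, covIter, covDer, nproj_eq_mulVec, hpd]
  change (normalMatrix (gr u) x *ᵥ (normalMatrix (gr u) x *ᵥ _ + _) - _ - _) B = _
  rw [Matrix.mulVec_add, Matrix.mulVec_mulVec, hidem, sub_right_comm, add_sub_cancel_left]
  simp only [Pi.sub_apply, Finset.sum_apply, Pi.smul_apply, smul_eq_mul]
  rfl

namespace DiffPoly

lemma covRemainder_succ {l : ℕ}
    (hR : ∀ I B, DiffPoly (m := m) (l + 1) 1 fun u x => covRemainder u l x I B)
    (hdR : ∀ i I B, DiffPoly (m := m) (l + 2) 2 fun u x =>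
      fderiv ℝ (fun y => covRemainder u l y I B) x (Pi.single i 1))
    (I : Fin (l + 3) → Fin 2) (B : Fin 2 ⊕ Fin m) :
    DiffPoly (l + 2) 2 fun u x => covRemainder u (l + 1) x I B := by
  refine DiffPoly.congr (.sub
    (.sum (s := Finset.univ) (by omega) fun C => (normalMatrix_gr B C).coeff_mul
      (.add (.sum (s := Finset.univ) (by omega) fun a => ?_) (hdR (I 0) (Fin.tail I) C)))
    (.sum (s := Finset.univ) (by omega) fun s => .sum (s := Finset.univ) (by omega) fun k => ?_))
    fun u x hu => Stmt18.covRemainder_succ hu hR I B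
  · exact ((normalMatrix_gr C (Sum.inr a)).fderiv_single (I 0)).mul_of_eq_of_le
      (higher l (Fin.tail I) a) (by omega) (by omega)
  · exact (chr_gr _ _ k).mul_of_eq_of_le (covIter_gr hR _ B) (by omega) (by omega)

lemma covRemainder (l : ℕ) (I : Fin (l + 3) → Fin 2) (B : Fin 2 ⊕ Fin m) :
    DiffPoly (l + 2) 2 fun u x => Stmt18.covRemainder u (l + 1) x I B := by
  induction l generalizing B with
  | zero =>
    have hzero (I B) : DiffPoly (m := m) 1 1 fun u x => Stmt18.covRemainder u 0 x I B :=
      (zero le_rfl).congr fun u x hu => congrFun (covRemainder_zero hu I) B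
    refine covRemainder_succ hzero (fun i I B => (zero le_rfl).congr fun u x hu => ?_) I B
    rw [EventuallyEq.fderiv_eq ((Eventually.eventually_nhds hu).mono fun y hy =>
      congrFun (covRemainder_zero hy I) B)]
    simp
  | succ l ih =>
    exact covRemainder_succ (fun I B => (ih I B).weaken) (fun i I B => (ih I B).fderiv_single i) I B

end DiffPoly
end CovariantRemainder

section Densities

open Matrix

variable {m : ℕ} {u : (Fin 2 → ℝ) → Fin m → ℝ} {x : Fin 2 → ℝ}

/-- The integrand `|D^{l+2}u|²` of the Sobolev norm. -/
def hessianDensity (u : (Fin 2 → ℝ) → Fin m → ℝ) (l : ℕ) (x : Fin 2 → ℝ) : ℝ :=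
  ∑ I : Fin (l + 2) → Fin 2, ∑ a, pdIter u (l + 2) x I a ^ 2

/-- The density of `|∇ˡA|²_g dμ` with respect to Lebesgue measure. -/
def covDensity (u : (Fin 2 → ℝ) → Fin m → ℝ) (l : ℕ) (x : Fin 2 → ℝ) : ℝ :=
  nCov2 (gr u) l x * √(gmet (gr u) x).det

/-- The squared Euclidean norm of `covRemainder u l x`. -/
def remainderDensity (u : (Fin 2 → ℝ) → Fin m → ℝ) (l : ℕ) (x : Fin 2 → ℝ) : ℝ :=
  ∑ I, ∑ B, covRemainder u l x I B ^ 2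

lemma hessianDensity_nonneg (u : (Fin 2 → ℝ) → Fin m → ℝ) (l : ℕ) (x : Fin 2 → ℝ) :
    0 ≤ hessianDensity u l x := by
  unfold hessianDensity
  positivity

lemma remainderDensity_nonneg (u : (Fin 2 → ℝ) → Fin m → ℝ) (l : ℕ) (x : Fin 2 → ℝ) :
    0 ≤ remainderDensity u l x := by
  unfold remainderDensity
  positivity

lemma one_le_sqrt_det_gmet_gr (hu : DifferentiableAt ℝ u x) : 1 ≤ √(gmet (gr u) x).det :=
  Real.one_le_sqrt.2 (one_le_det_gmet_gr hu)

lemma nCov2_gr_le_covDensity (hu : DifferentiableAt ℝ u x) (l : ℕ) :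
    nCov2 (gr u) l x ≤ covDensity u l x :=
  le_mul_of_one_le_right (nCov2_nonneg (isUnit_det_gmet_gr hu) l) (one_le_sqrt_det_gmet_gr hu)

lemma covDensity_nonneg (hu : DifferentiableAt ℝ u x) (l : ℕ) : 0 ≤ covDensity u l x :=
  mul_nonneg (nCov2_nonneg (isUnit_det_gmet_gr hu) l) (Real.sqrt_nonneg _)

/-- The normal vectors `(-Duₐ, eₐ)` of the graph of `u`, as rows. -/
def normalFrame (u : (Fin 2 → ℝ) → Fin m → ℝ) (x : Fin 2 → ℝ) :
    Matrix (Fin m) (Fin 2 ⊕ Fin m) ℝ :=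
  Matrix.fromCols (-Matrix.of fun a i => pdIter u 1 x (fun _ => i) a) 1

lemma normalFrame_mul_normalMatrix (hu : DifferentiableAt ℝ u x) :
    normalFrame u x * normalMatrix (gr u) x = normalFrame u x := by
  have hJ : (tangentMatrix (gr u) x)ᵀ =
      Matrix.fromRows 1 (Matrix.of fun a i => pdIter u 1 x (fun _ => i) a) := by
    ext (i | a) k
    · simp [tangentMatrix, pd_gr_inl hu, Pi.single_apply, Matrix.one_apply]
    · simp [tangentMatrix, pd_gr_inr hu]
  have horth : normalFrame u x * (tangentMatrix (gr u) x)ᵀ = 0 := by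
    rw [hJ, normalFrame, Matrix.fromCols_mul_fromRows, Matrix.mul_one, Matrix.one_mul,
      neg_add_cancel]
  rw [normalMatrix, Matrix.mul_sub, Matrix.mul_one, ← Matrix.mul_assoc, ← Matrix.mul_assoc, horth,
    Matrix.zero_mul, Matrix.zero_mul, sub_zero]

lemma sum_sq_le_sum_normalMatrix_mulVec_sq {α : ℝ} (hu : SmoothGradLE α u x) (D : Fin m → ℝ) :
    ∑ a, D a ^ 2 ≤ m * ((2 + m) * max α 1 ^ 2) *
      ∑ B, (normalMatrix (gr u) x *ᵥ Sum.elim (0 : Fin 2 → ℝ) D) B ^ 2 := by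
  have hD : normalFrame u x *ᵥ (normalMatrix (gr u) x *ᵥ Sum.elim (0 : Fin 2 → ℝ) D) = D := by
    rw [Matrix.mulVec_mulVec, normalFrame_mul_normalMatrix hu.smooth.differentiableAt, normalFrame,
      Matrix.fromCols_mulVec_sumElim, Matrix.mulVec_zero, Matrix.one_mulVec, zero_add]
  have hentry (a : Fin m) (B : Fin 2 ⊕ Fin m) : |normalFrame u x a B| ≤ max α 1 := by
    rcases B with i | b
    · simpa [normalFrame] using Or.inl (hu.abs_le (fun _ => i) a)
    · rcases eq_or_ne a b with rfl | hab
      · simp [normalFrame]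
      · simp [normalFrame, hab]
  simpa [hD] using sum_mulVec_sq_le hentry
    (normalMatrix (gr u) x *ᵥ Sum.elim (0 : Fin 2 → ℝ) D)

lemma exists_sum_covIter_sq_le (m : ℕ) {α : ℝ} (hα : 0 ≤ α) (l : ℕ) : ∃ C > (0 : ℝ),
    ∀ (u : (Fin 2 → ℝ) → Fin m → ℝ) (x), SmoothGradLE α u x →
      ∑ I, ∑ B, covIter (gr u) l x I B ^ 2 ≤ C * covDensity u l x := by
  obtain ⟨c, hc, hg⟩ := DiffPoly.exists_forall_abs_coeff_le (m := m)
    (fun p : Fin 2 × Fin 2 => DiffPoly.gmet_gr p.1 p.2) hα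
  refine ⟨Fintype.card (Fin (l + 2) → Fin 2) * c ^ (l + 2), by positivity, fun u x hu => ?_⟩
  have hdiff := hu.smooth.differentiableAt
  have hprod (I : Fin (l + 2) → Fin 2) : ∏ s, gmet (gr u) x (I s) (I s) ≤ c ^ (l + 2) := by
    refine (le_abs_self _).trans ?_
    rw [Finset.abs_prod]
    exact (Finset.prod_le_prod (fun _ _ => abs_nonneg _) fun s _ =>
      hg u x hu (I s, I s)).trans_eq (by simp)
  calc ∑ I, ∑ B, covIter (gr u) l x I B ^ 2
      ≤ ∑ _I : Fin (l + 2) → Fin 2, c ^ (l + 2) * covDensity u l x :=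
        Finset.sum_le_sum fun I _ => (sum_covIter_sq_le (isUnit_det_gmet_gr hdiff) l I).trans
          (mul_le_mul (hprod I) (nCov2_gr_le_covDensity hdiff l)
            (nCov2_nonneg (isUnit_det_gmet_gr hdiff) l) (by positivity))
    _ = _ := by simp [mul_assoc]

lemma exists_covDensity_le_sum_covIter_sq (m : ℕ) {α : ℝ} (hα : 0 ≤ α) (l : ℕ) : ∃ C > (0 : ℝ),
    ∀ (u : (Fin 2 → ℝ) → Fin m → ℝ) (x), SmoothGradLE α u x →
      covDensity u l x ≤ C * ∑ I, ∑ B, covIter (gr u) l x I B ^ 2 := by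
  obtain ⟨c, hc, hinv⟩ := DiffPoly.exists_forall_abs_coeff_le (m := m)
    (fun p : Fin 2 × Fin 2 => DiffPoly.inv_gmet_gr p.1 p.2) hα
  obtain ⟨d, hd, hdet⟩ := DiffPoly.exists_forall_abs_coeff_le (m := m)
    (fun _ : Unit => DiffPoly.det_gmet_gr) hα
  refine ⟨c ^ (l + 2) * Fintype.card (Fin (l + 2) → Fin 2) * √d, by positivity, fun u x hu => ?_⟩
  have hnorm : nCov2 (gr u) l x ≤ c ^ (l + 2) * Fintype.card (Fin (l + 2) → Fin 2) *
      ∑ I, ∑ B, covIter (gr u) l x I B ^ 2 := by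
    rw [nCov2_eq_sum_tensorNormSq, Finset.sum_comm, Finset.mul_sum]
    refine Finset.sum_le_sum fun B _ => ?_
    simpa using tensorNormSq_le (by positivity) (fun i j => hinv u x hu (i, j))
      fun I => covIter (gr u) l x I B
  rw [covDensity, mul_right_comm]
  gcongr
  exact (le_abs_self _).trans (hdet u x hu ())

lemma exists_hessianDensity_le (m : ℕ) {α : ℝ} (hα : 0 ≤ α) (l : ℕ) : ∃ C > (0 : ℝ),
    ∀ (u : (Fin 2 → ℝ) → Fin m → ℝ) (x), SmoothGradLE α u x →
      hessianDensity u l x ≤ C * (covDensity u l x + remainderDensity u l x) := by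
  obtain ⟨C, hC, hcov⟩ := exists_sum_covIter_sq_le m hα l
  set c := m * ((2 + m) * max α 1 ^ 2)
  have : 0 ≤ c := by positivity
  refine ⟨2 * (c * (C + 1)) + 1, by positivity, fun u x hu => ?_⟩
  have hN (I : Fin (l + 2) → Fin 2) :=
    sum_sq_le_sum_normalMatrix_mulVec_sq hu (pdIter u (l + 2) x I)
  have hcov0 := covDensity_nonneg hu.smooth.differentiableAt l
  have hrem0 := remainderDensity_nonneg u l x
  calc hessianDensity u l x
      ≤ ∑ I, c * ∑ B, 2 * (covIter (gr u) l x I B ^ 2 + covRemainder u l x I B ^ 2) := by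
        refine Finset.sum_le_sum fun I _ => (hN I).trans ?_
        gcongr with B
        rw [← sub_eq_iff_eq_add.2 (covIter_gr l I), Pi.sub_apply, sub_eq_add_neg,
          ← neg_sq (covRemainder u l x I B)]
        exact add_sq_le
    _ = 2 * (c * (∑ I, ∑ B, covIter (gr u) l x I B ^ 2 + remainderDensity u l x)) := by
        simp only [← Finset.mul_sum, Finset.sum_add_distrib, remainderDensity]
        ring
    _ ≤ 2 * (c * ((C + 1) * (covDensity u l x + remainderDensity u l x))) := by
        gcongr
        linarith [hcov u x hu, mul_nonneg hC.le hrem0]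
    _ ≤ _ := by
        linarith

lemma exists_covDensity_le (m : ℕ) {α : ℝ} (hα : 0 ≤ α) (l : ℕ) : ∃ C > (0 : ℝ),
    ∀ (u : (Fin 2 → ℝ) → Fin m → ℝ) (x), SmoothGradLE α u x →
      covDensity u l x ≤ C * (hessianDensity u l x + remainderDensity u l x) := by
  obtain ⟨C, hC, hcov⟩ := exists_covDensity_le_sum_covIter_sq m hα l
  obtain ⟨c, hc, hN⟩ := DiffPoly.exists_forall_abs_coeff_le (m := m)
    (fun p : (Fin 2 ⊕ Fin m) × (Fin 2 ⊕ Fin m) => DiffPoly.normalMatrix_gr p.1 p.2) hα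
  set c' : ℝ := (2 + m) * ((2 + m) * c ^ 2)
  have hc' : 0 ≤ c' := by positivity
  refine ⟨C * (2 * (c' + 1)), by positivity, fun u x hu => (hcov u x hu).trans ?_⟩
  have hmul (I : Fin (l + 2) → Fin 2) : ∑ B, (normalMatrix (gr u) x *ᵥ
      Sum.elim (0 : Fin 2 → ℝ) (pdIter u (l + 2) x I)) B ^ 2 ≤
        c' * ∑ a, pdIter u (l + 2) x I a ^ 2 := by
    simpa [c'] using sum_mulVec_sq_le (M := normalMatrix (gr u) x)
      (fun B D => hN u x hu (B, D)) (Sum.elim (0 : Fin 2 → ℝ) (pdIter u (l + 2) x I))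
  have hhess0 := hessianDensity_nonneg u l x
  have hrem0 := remainderDensity_nonneg u l x
  rw [mul_assoc C]
  gcongr
  calc ∑ I, ∑ B, covIter (gr u) l x I B ^ 2
      ≤ ∑ I, ∑ B, 2 * ((normalMatrix (gr u) x *ᵥ
          Sum.elim (0 : Fin 2 → ℝ) (pdIter u (l + 2) x I)) B ^ 2 + covRemainder u l x I B ^ 2) := by
        simp only [covIter_gr, Pi.add_apply]
        gcongr
        exact add_sq_le
    _ ≤ 2 * (∑ I, c' * ∑ a, pdIter u (l + 2) x I a ^ 2 + remainderDensity u l x) := by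
        simp only [← Finset.mul_sum, Finset.sum_add_distrib, remainderDensity]
        gcongr
        rw [Finset.mul_sum]
        exact Finset.sum_le_sum fun I _ => hmul I
    _ ≤ _ := by
        rw [← Finset.mul_sum, ← hessianDensity]
        nlinarith

end Densities

section Disks

open Filter

lemma Dr_subset_Dr {ρ r : ℝ} (hρ : 0 ≤ ρ) (h : ρ ≤ r) : Dr ρ ⊆ Dr r :=
  fun _ hx => lt_of_lt_of_le hx (pow_le_pow_left₀ hρ h 2)

lemma isBounded_Dr (r : ℝ) : Bornology.IsBounded (Dr r) := by
  refine (Metric.isBounded_closedBall (x := 0) (r := |r|)).subset fun x hx => ?_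
  rw [mem_closedBall_zero_iff, pi_norm_le_iff_of_nonneg (abs_nonneg r)]
  refine fun b => sq_le_sq.1 ?_
  linarith [(mem_Dr_iff b).1 hx, sq_nonneg (x (b + 1))]

lemma closure_Dr_subset_Dr {ρ r : ℝ} (hρ : 0 ≤ ρ) (h : ρ < r) : closure (Dr ρ) ⊆ Dr r :=
  (closure_lt_subset_le (by fun_prop) (by fun_prop)).trans
    fun _ hx => lt_of_le_of_lt hx (pow_lt_pow_left₀ h hρ two_ne_zero)

lemma setLIntegral_Dr_ne_top {f : (Fin 2 → ℝ) → ℝ} {ρ r : ℝ} (hρ : 0 ≤ ρ) (h : ρ < r)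
    (hf : ContinuousOn f (Dr r)) : ∫⁻ x in Dr ρ, ENNReal.ofReal (f x) ≠ ⊤ := by
  have hint : IntegrableOn f (Dr ρ) := ((hf.mono (closure_Dr_subset_Dr hρ h)).integrableOn_compact
    (isBounded_Dr ρ).isCompact_closure).mono_set subset_closure
  exact ((lintegral_ofReal_le_lintegral_enorm f).trans_lt hint.2).ne

lemma setLIntegral_Dr_le_of_forall_lt {F : (Fin 2 → ℝ) → ENNReal} {M : ENNReal} {r₀ r : ℝ}
    (hr₀ : 0 ≤ r₀) (hr : r₀ < r) (h : ∀ ρ ∈ Ioo r₀ r, ∫⁻ x in Dr ρ, F x ≤ M) :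
    ∫⁻ x in Dr r, F x ≤ M := by
  obtain ⟨ρ, hρmono, hρ, hρr⟩ := exists_seq_strictMono_tendsto' hr
  have hρ0 (k : ℕ) : 0 ≤ ρ k := hr₀.trans (hρ k).1.le
  have hunion : Dr r = ⋃ k, Dr (ρ k) := by
    refine Subset.antisymm (fun x hx => ?_) <| iUnion_subset fun k =>
      Dr_subset_Dr (hρ0 k) (hρ k).2.le
    obtain ⟨k, hk⟩ := ((hρr.pow 2).eventually_const_lt hx).exists
    exact mem_iUnion.2 ⟨k, hk⟩
  rw [hunion, setLIntegral_iUnion_of_directed F <| directed_of_isDirected_le fun k l hkl =>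
    Dr_subset_Dr (hρ0 k) (hρmono.monotone hkl)]
  exact iSup_le fun k => h (ρ k) (hρ k)

lemma setLIntegral_Dr_le_of_absorb {f : (Fin 2 → ℝ) → ℝ} {M : ENNReal} {r₀ r : ℝ}
    (hr₀ : 0 ≤ r₀) (hr : r₀ < r) (hf : ContinuousOn f (Dr r))
    (h : ∀ ρ ∈ Ioo r₀ r, ∫⁻ x in Dr ρ, ENNReal.ofReal (f x) ≤
      M + (∫⁻ x in Dr ρ, ENNReal.ofReal (f x)) / 2) :
    ∫⁻ x in Dr r, ENNReal.ofReal (f x) ≤ 2 * M := by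
  refine setLIntegral_Dr_le_of_forall_lt hr₀ hr fun ρ hρ => ?_
  have hfin := setLIntegral_Dr_ne_top (hr₀.trans hρ.1.le) hρ.2 hf
  have habsorb := h ρ hρ
  set X := ∫⁻ x in Dr ρ, ENNReal.ofReal (f x)
  have hhalf : X / 2 ≤ M := by
    refine (ENNReal.add_le_add_iff_right (ENNReal.div_ne_top hfin two_ne_zero)).1 ?_
    rwa [ENNReal.add_halves]
  calc X = 2 * (X / 2) := (ENNReal.mul_div_cancel two_ne_zero ENNReal.ofNat_ne_top).symm
    _ ≤ 2 * M := by gcongr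

end Disks

section Integration

variable {V : Type*} [MeasurableSpace V] {μ : Measure V} {Ω : Set V} {f g h : V → ℝ} {C : ℝ}

lemma setLIntegral_ofReal_le_mul (hΩ : MeasurableSet Ω) (hC : 0 ≤ C)
    (hf : ∀ x ∈ Ω, f x ≤ C * g x) :
    ∫⁻ x in Ω, ENNReal.ofReal (f x) ∂μ ≤
      ENNReal.ofReal C * ∫⁻ x in Ω, ENNReal.ofReal (g x) ∂μ := by
  rw [← lintegral_const_mul' _ _ ENNReal.ofReal_ne_top]
  refine setLIntegral_mono' hΩ fun x hx => ?_
  rw [← ENNReal.ofReal_mul hC]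
  exact ENNReal.ofReal_le_ofReal (hf x hx)

lemma setLIntegral_ofReal_le_mul_add [TopologicalSpace V] [OpensMeasurableSpace V]
    (hΩ : MeasurableSet Ω) (hC : 0 ≤ C) (hh : ContinuousOn h Ω)
    (hf : ∀ x ∈ Ω, f x ≤ C * (g x + h x)) :
    ∫⁻ x in Ω, ENNReal.ofReal (f x) ∂μ ≤ ENNReal.ofReal C *
      (∫⁻ x in Ω, ENNReal.ofReal (g x) ∂μ + ∫⁻ x in Ω, ENNReal.ofReal (h x) ∂μ) := by
  refine (setLIntegral_ofReal_le_mul hΩ hC hf).trans ?_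
  rw [← lintegral_add_right' _ (hh.aemeasurable hΩ).ennreal_ofReal]
  gcongr
  exact ENNReal.ofReal_add_le

end Integration

section SecondDerivatives

variable {m : ℕ} {u : (Fin 2 → ℝ) → Fin m → ℝ} {x : Fin 2 → ℝ} {α β : ℝ}

/-- The standing hypotheses on `u`: smoothness with `|Du| ≤ α` (entrywise) and `|D²u| ≤ β` on
`Ω`. -/
structure C2BoundedOn (α β : ℝ) (u : (Fin 2 → ℝ) → Fin m → ℝ) (Ω : Set (Fin 2 → ℝ)) : Prop where
  smoothGradLE : ∀ x ∈ Ω, SmoothGradLE α u x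
  hessian_le : ∀ x ∈ Ω, hessianDensity u 0 x ≤ β ^ 2

lemma C2BoundedOn.mono {Ω Ω' : Set (Fin 2 → ℝ)} (hu : C2BoundedOn α β u Ω) (h : Ω' ⊆ Ω) :
    C2BoundedOn α β u Ω' :=
  ⟨fun x hx => hu.smoothGradLE x (h hx), fun x hx => hu.hessian_le x (h hx)⟩

lemma norm_iteratedFDeriv_fderiv_fderiv (u : (Fin 2 → ℝ) → Fin m → ℝ) (j : ℕ) (x : Fin 2 → ℝ) :
    ‖iteratedFDeriv ℝ j (fderiv ℝ (fderiv ℝ u)) x‖ = ‖iteratedFDeriv ℝ (j + 2) u x‖ := by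
  rw [norm_iteratedFDeriv_fderiv, norm_iteratedFDeriv_fderiv]

lemma SmoothNear.abs_pdIter_le (hu : SmoothNear u x) (j : ℕ) (I : Fin (j + 2) → Fin 2)
    (a : Fin m) :
    |pdIter u (j + 2) x I a| ≤ ‖iteratedFDeriv ℝ j (fderiv ℝ (fderiv ℝ u)) x‖ := by
  rw [norm_iteratedFDeriv_fderiv_fderiv, hu.pdIter_eq, ← Real.norm_eq_abs]
  refine (norm_le_pi_norm _ a).trans ?_
  refine (iteratedFDeriv ℝ (j + 2) u x).unit_le_opNorm ?_
  rw [pi_norm_le_iff_of_nonneg zero_le_one]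
  intro s
  rw [Pi.norm_single, norm_one]

lemma SmoothNear.norm_iteratedFDeriv_sq_le (hu : SmoothNear u x) (j : ℕ) :
    ‖iteratedFDeriv ℝ j (fderiv ℝ (fderiv ℝ u)) x‖ ^ 2 ≤ 2 ^ (j + 2) * hessianDensity u j x := by
  have hnorm (v : Fin m → ℝ) : ‖v‖ ^ 2 ≤ ∑ a, v a ^ 2 := by
    have hsum : 0 ≤ ∑ a, v a ^ 2 := by positivity
    refine (Real.le_sqrt (norm_nonneg v) hsum).1 <|
      (pi_norm_le_iff_of_nonneg (Real.sqrt_nonneg _)).2 fun a => ?_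
    exact Real.abs_le_sqrt
      (Finset.single_le_sum (f := fun a => v a ^ 2) (fun _ _ => sq_nonneg _) (Finset.mem_univ a))
  rw [norm_iteratedFDeriv_fderiv_fderiv]
  calc _ ≤ (∑ I : Fin (j + 2) → Fin 2, ‖pdIter u (j + 2) x I‖) ^ 2 := by
        gcongr
        simpa only [hu.pdIter_eq] using norm_le_sum_norm_apply_single (iteratedFDeriv ℝ (j + 2) u x)
    _ ≤ 2 ^ (j + 2) * ∑ I : Fin (j + 2) → Fin 2, ‖pdIter u (j + 2) x I‖ ^ 2 := by
        simpa using sq_sum_le_card_mul_sum_sq (s := Finset.univ)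
          (f := fun I : Fin (j + 2) → Fin 2 => ‖pdIter u (j + 2) x I‖)
    _ ≤ _ := by
        unfold hessianDensity
        gcongr
        exact hnorm _

lemma SmoothNear.norm_fderiv_fderiv_sq_le (hu : SmoothNear u x) :
    ‖fderiv ℝ (fderiv ℝ u) x‖ ^ 2 ≤ 2 ^ 2 * hessianDensity u 0 x := by
  simpa only [norm_iteratedFDeriv_zero] using hu.norm_iteratedFDeriv_sq_le 0

lemma SmoothNear.contDiffAt_fderiv_fderiv (hu : SmoothNear u x) :
    ContDiffAt ℝ ∞ (fderiv ℝ (fderiv ℝ u)) x :=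
  (hu.self_of_nhds.fderiv_right (m := ∞) (by simp)).fderiv_right (by simp)

lemma SmoothNear.sq_jetDensity_le (hu : SmoothNear u x) (n : ℕ) {s : ℝ} (hs : 0 < s) :
    jetDensity n s (fderiv ℝ (fderiv ℝ u)) x ^ 2 ≤
      2 ^ (n + 4) *
        (hessianDensity u (n + 1) x + ((s ^ (n + 1)) ^ 2)⁻¹ * hessianDensity u 0 x) := by
  have htop := hu.norm_iteratedFDeriv_sq_le (n + 1)
  calc _ ≤ 2 * (‖iteratedFDeriv ℝ (n + 1) (fderiv ℝ (fderiv ℝ u)) x‖ ^ 2 +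
        (‖fderiv ℝ (fderiv ℝ u) x‖ / s ^ (n + 1)) ^ 2) := add_sq_le
    _ ≤ 2 * (2 ^ (n + 1 + 2) * hessianDensity u (n + 1) x +
        2 ^ (n + 1 + 2) * hessianDensity u 0 x / (s ^ (n + 1)) ^ 2) := by
        rw [div_pow]
        have := hessianDensity_nonneg u 0 x
        gcongr
        refine hu.norm_fderiv_fderiv_sq_le.trans ?_
        gcongr <;> norm_num
    _ = _ := by ring

end SecondDerivatives

section Estimates

open Filter Topology
open scoped NNReal

variable {m : ℕ} {u : (Fin 2 → ℝ) → Fin m → ℝ} {α β r : ℝ}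

lemma continuousOn_hessianDensity {Ω : Set (Fin 2 → ℝ)} (hu : ∀ x ∈ Ω, SmoothNear u x) (l : ℕ) :
    ContinuousOn (hessianDensity u l) Ω :=
  continuousOn_finsetSum _ fun I _ => continuousOn_finsetSum _ fun a _ =>
    ((DiffPoly.higher l I a).continuousOn hu).pow 2

lemma continuousOn_remainderDensity {Ω : Set (Fin 2 → ℝ)} (hu : ∀ x ∈ Ω, SmoothNear u x) (l : ℕ) :
    ContinuousOn (remainderDensity u (l + 1)) Ω :=
  continuousOn_finsetSum _ fun I _ => continuousOn_finsetSum _ fun B _ =>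
    ((DiffPoly.covRemainder l I B).continuousOn hu).pow 2

lemma DiffPoly.covIter (l : ℕ) (I : Fin (l + 2) → Fin 2) (B : Fin 2 ⊕ Fin m) :
    DiffPoly (l + 1) 1 fun u x => Stmt18.covIter (gr u) l x I B :=
  covIter_gr (fun I B => by
    cases l with
    | zero => exact (zero le_rfl).congr fun u x hu => congrFun (covRemainder_zero hu I) B
    | succ l => exact (covRemainder l I B).weaken) I B

lemma continuousOn_covDensity {Ω : Set (Fin 2 → ℝ)} (hu : ∀ x ∈ Ω, SmoothNear u x) (l : ℕ) :
    ContinuousOn (covDensity u l) Ω := by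
  have hcov (I B) := (DiffPoly.covIter (m := m) l I B).continuousOn hu
  have hinv (i j) := (DiffPoly.inv_gmet_gr (m := m) i j).continuousOn hu
  refine ContinuousOn.mul ?_ (DiffPoly.det_gmet_gr.continuousOn hu).sqrt
  exact continuousOn_finsetSum _ fun I _ => continuousOn_finsetSum _ fun J _ =>
    (continuousOn_finsetProd _ fun s _ => hinv _ _).mul <|
      continuousOn_finsetSum _ fun B _ => (hcov I B).mul (hcov J B)

lemma exists_remainderDensity_le_of_hasJetScale (m : ℕ) {K : ℝ} (hα : 0 ≤ α) (hβ : 0 ≤ β)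
    (hK : 0 ≤ K) (n : ℕ) :
    ∃ C ≥ (0 : ℝ), ∀ (u : (Fin 2 → ℝ) → Fin m → ℝ) (x : Fin 2 → ℝ), SmoothGradLE α u x →
      ∀ A ∈ Icc 0 β, ∀ t ∈ Ioc (0 : ℝ) 1, HasJetScale n K (fderiv ℝ (fderiv ℝ u)) x A t →
      remainderDensity u (n + 1) x ≤ C * (A / t ^ n) ^ 2 := by
  choose C hC hR using fun I B => (DiffPoly.covRemainder (m := m) n I B).exists_abs_le hα hβ hK
  refine ⟨∑ I, ∑ B, (C I B * β) ^ 2, by positivity, fun u x hu A hA t ht hjet => ?_⟩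
  have hA0 := hA.1
  have ht0 := ht.1
  have hcomp (I B) : covRemainder u (n + 1) x I B ^ 2 ≤ (C I B * β) ^ 2 * (A / t ^ n) ^ 2 := by
    rw [← mul_pow, ← sq_abs]
    gcongr
    calc _ ≤ C I B * ((A * t) ^ 2 / t ^ (n + 2)) := hR I B u x hu A hA t ht fun j hj J a =>
          (hu.smooth.abs_pdIter_le j J a).trans (hjet j (by omega))
      _ = C I B * A * (A / t ^ n) := by rw [pow_add]; field_simp
      _ ≤ C I B * β * (A / t ^ n) := by
          have := hC I B
          gcongr
          exact hA.2
  simp only [remainderDensity, Finset.sum_mul]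
  gcongr
  exact hcomp _ _

lemma C2BoundedOn.norm_fderiv_fderiv_le {Ω : Set (Fin 2 → ℝ)} (hu : C2BoundedOn α β u Ω)
    (hβ : 0 ≤ β) {x : Fin 2 → ℝ} (hx : x ∈ Ω) : ‖fderiv ℝ (fderiv ℝ u) x‖ ≤ 2 * β := by
  refine abs_le_of_sq_le_sq' ?_ (by positivity) |>.2
  calc _ ≤ 2 ^ 2 * hessianDensity u 0 x := (hu.smoothGradLE x hx).smooth.norm_fderiv_fderiv_sq_le
    _ ≤ 2 ^ 2 * β ^ 2 := by gcongr; exact hu.hessian_le x hx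
    _ = (2 * β) ^ 2 := (mul_pow _ _ _).symm

lemma exists_pos_mul_sq_le {r₀ M ε : ℝ} (hr₀ : 0 < r₀) (hε : 0 < ε) :
    ∃ s > 0, 8 * s ≤ r₀ ∧ s ≤ 1 ∧ M * s ^ 2 ≤ ε := by
  have hlim (f : ℝ → ℝ) (hf : Continuous f) (h0 : f 0 = 0) {c : ℝ} (hc : 0 < c) :
      ∀ᶠ s in 𝓝[>] 0, f s ≤ c :=
    ((hf.tendsto' 0 0 h0).mono_left nhdsWithin_le_nhds).eventually_le_const hc
  have hev := (hlim (8 * ·) (by fun_prop) (by simp) hr₀).and <|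
    (hlim id continuous_id rfl one_pos).and <| hlim (M * · ^ 2) (by fun_prop) (by simp) hε
  obtain ⟨s, hs, hs0⟩ := (hev.and self_mem_nhdsWithin).exists
  exact ⟨s, hs0, hs⟩

lemma exists_lintegral_remainderDensity_le (m : ℕ) {r₀ ε : ℝ} (hα : 0 ≤ α) (hβ : 0 < β)
    (hr₀ : 0 < r₀) (hε : 0 < ε) (n : ℕ) :
    ∃ C : ℝ≥0, ∀ (u : (Fin 2 → ℝ) → Fin m → ℝ) (ρ : ℝ), r₀ ≤ ρ → C2BoundedOn α β u (Dr ρ) →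
      ∫⁻ x in Dr ρ, ENNReal.ofReal (remainderDensity u (n + 1) x) ≤
        ENNReal.ofReal ε * ((∫⁻ x in Dr ρ, ENNReal.ofReal (hessianDensity u (n + 1) x)) +
          C * ∫⁻ x in Dr ρ, ENNReal.ofReal (hessianDensity u 0 x)) := by
  obtain ⟨K, hK, hscale⟩ :=
    exists_lintegral_jetScale_le ((Fin 2 → ℝ) →L[ℝ] (Fin 2 → ℝ) →L[ℝ] Fin m → ℝ) n
  obtain ⟨C, hC, hrem⟩ := exists_remainderDensity_le_of_hasJetScale m hα
    (by positivity : 0 ≤ 2 * β) hK.le n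
  obtain ⟨s, hs, hsr₀, hs1, hsε⟩ := exists_pos_mul_sq_le (M := C * K * 2 ^ (n + 4)) hr₀ hε
  refine ⟨((s ^ (n + 1)) ^ 2)⁻¹.toNNReal, fun u ρ hρ hu => ?_⟩
  have hsmooth (x) (hx : x ∈ Dr ρ) := (hu.smoothGradLE x hx).smooth
  have hmeas : MeasurableSet (Dr ρ) := (isOpen_Dr ρ).measurableSet
  obtain ⟨A, h, hAh, hint⟩ := hscale (fderiv ℝ (fderiv ℝ u)) ρ (2 * β) s (by positivity) hs
    (hsr₀.trans hρ) (fun x hx => (hsmooth x hx).contDiffAt_fderiv_fderiv)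
    fun x hx => hu.norm_fderiv_fderiv_le hβ.le hx
  have hremA := setLIntegral_ofReal_le_mul (μ := volume) hmeas hC fun x hx =>
    hrem u x (hu.smoothGradLE x hx) (A x) (hAh x hx).1 (h x)
      ⟨(hAh x hx).2.1.1, (hAh x hx).2.1.2.trans hs1⟩ (hAh x hx).2.2
  have hjet := setLIntegral_ofReal_le_mul_add (μ := volume) hmeas (by positivity)
    ((continuousOn_hessianDensity hsmooth 0).const_mul _)
    fun x hx => (hsmooth x hx).sq_jetDensity_le n hs
  have hconst := setLIntegral_ofReal_le_mul (μ := volume) (C := ((s ^ (n + 1)) ^ 2)⁻¹) hmeas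
    (by positivity) fun x _ => le_refl (((s ^ (n + 1)) ^ 2)⁻¹ * hessianDensity u 0 x)
  calc _ ≤ ENNReal.ofReal C * (ENNReal.ofReal (K * s ^ 2) * (ENNReal.ofReal (2 ^ (n + 4)) *
        (_ + ENNReal.ofReal _ * _))) := by
        refine hremA.trans ?_
        gcongr
        refine hint.trans ?_
        gcongr
        refine hjet.trans ?_
        gcongr
    _ = ENNReal.ofReal (C * K * 2 ^ (n + 4) * s ^ 2) * (_ + ENNReal.ofReal _ * _) := by
        rw [← mul_assoc, ← mul_assoc, ← ENNReal.ofReal_mul hC, ← ENNReal.ofReal_mul (by positivity)]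
        congr 2
        ring
    _ ≤ _ := mul_le_mul_left (ENNReal.ofReal_le_ofReal hsε) _

end Estimates

section SobolevComparison

open scoped NNReal

variable {α β r : ℝ}

lemma ofReal_mul_ofReal_inv_two_mul {c : ℝ} (hc : 0 < c) :
    ENNReal.ofReal c * ENNReal.ofReal (2 * c)⁻¹ = 2⁻¹ := by
  rw [← ENNReal.ofReal_mul hc.le, mul_inv, mul_left_comm, mul_inv_cancel₀ hc.ne', mul_one,
    ENNReal.ofReal_inv_of_pos two_pos, ENNReal.ofReal_ofNat]

lemma exists_lintegral_hessianDensity_succ_le (m : ℕ) (hα : 0 ≤ α) (hβ : 0 < β) (hr : 0 < r)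
    (n : ℕ) :
    ∃ C : ℝ≥0, ∀ u : (Fin 2 → ℝ) → Fin m → ℝ, C2BoundedOn α β u (Dr r) →
      ∫⁻ x in Dr r, ENNReal.ofReal (hessianDensity u (n + 1) x) ≤
        C * ((∫⁻ x in Dr r, ENNReal.ofReal (covDensity u (n + 1) x)) +
          ∫⁻ x in Dr r, ENNReal.ofReal (hessianDensity u 0 x)) := by
  obtain ⟨C₁, hC₁, hpt⟩ := exists_hessianDensity_le m hα (n + 1)
  obtain ⟨C₂, hrem⟩ := exists_lintegral_remainderDensity_le m hα hβ (half_pos hr)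
    (by positivity : 0 < (2 * C₁)⁻¹) n
  refine ⟨2 * (C₁.toNNReal + C₂), fun u hu => ?_⟩
  rw [ENNReal.coe_mul, mul_assoc]
  refine setLIntegral_Dr_le_of_absorb (half_pos hr).le (half_lt_self hr)
    (continuousOn_hessianDensity (fun x hx => (hu.smoothGradLE x hx).smooth) _) fun ρ hρ => ?_
  have hρr : Dr ρ ⊆ Dr r := Dr_subset_Dr ((half_pos hr).trans hρ.1).le hρ.2.le
  have huρ := hu.mono hρr
  have hhess := setLIntegral_ofReal_le_mul_add (μ := volume) (isOpen_Dr ρ).measurableSet hC₁.le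
    (continuousOn_remainderDensity (fun x hx => (huρ.smoothGradLE x hx).smooth) _)
    fun x hx => hpt u x (huρ.smoothGradLE x hx)
  have hrem := hrem u ρ hρ.1.le huρ
  have hcov := lintegral_mono_set (μ := volume)
    (f := fun x => ENNReal.ofReal (covDensity u (n + 1) x)) hρr
  have hhess₀ := lintegral_mono_set (μ := volume)
    (f := fun x => ENNReal.ofReal (hessianDensity u 0 x)) hρr
  set X := ∫⁻ x in Dr ρ, ENNReal.ofReal (hessianDensity u (n + 1) x)
  set G := ∫⁻ x in Dr r, ENNReal.ofReal (covDensity u (n + 1) x)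
  set H := ∫⁻ x in Dr r, ENNReal.ofReal (hessianDensity u 0 x)
  calc X ≤ ENNReal.ofReal C₁ * (G + ENNReal.ofReal (2 * C₁)⁻¹ * (X + C₂ * H)) := by
        refine hhess.trans ?_
        gcongr
        refine hrem.trans ?_
        gcongr
    _ = ENNReal.ofReal C₁ * G + 2⁻¹ * (C₂ * H) + X / 2 := by
        rw [mul_add, ← mul_assoc, ofReal_mul_ofReal_inv_two_mul hC₁, ENNReal.div_eq_inv_mul]
        ring
    _ ≤ ENNReal.ofReal C₁ * (G + H) + 1 * (C₂ * (G + H)) + X / 2 := by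
        gcongr
        exacts [le_self_add, ENNReal.inv_le_one.2 one_le_two, le_add_self]
    _ = _ := by
        rw [one_mul, ENNReal.coe_add, add_mul]
        rfl

lemma exists_lintegral_covDensity_succ_le (m : ℕ) (hα : 0 ≤ α) (hβ : 0 < β) (hr : 0 < r)
    (n : ℕ) :
    ∃ C : ℝ≥0, ∀ u : (Fin 2 → ℝ) → Fin m → ℝ, C2BoundedOn α β u (Dr r) →
      ∫⁻ x in Dr r, ENNReal.ofReal (covDensity u (n + 1) x) ≤
        C * ((∫⁻ x in Dr r, ENNReal.ofReal (hessianDensity u (n + 1) x)) +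
          ∫⁻ x in Dr r, ENNReal.ofReal (hessianDensity u 0 x)) := by
  obtain ⟨C₁, hC₁, hpt⟩ := exists_covDensity_le m hα (n + 1)
  obtain ⟨C₂, hrem⟩ := exists_lintegral_remainderDensity_le m hα hβ hr one_pos n
  refine ⟨C₁.toNNReal * (2 + C₂), fun u hu => ?_⟩
  have hcov := setLIntegral_ofReal_le_mul_add (μ := volume) (isOpen_Dr r).measurableSet hC₁.le
    (continuousOn_remainderDensity (fun x hx => (hu.smoothGradLE x hx).smooth) _)
    fun x hx => hpt u x (hu.smoothGradLE x hx)
  have hrem := hrem u r le_rfl hu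
  set X := ∫⁻ x in Dr r, ENNReal.ofReal (hessianDensity u (n + 1) x)
  set H := ∫⁻ x in Dr r, ENNReal.ofReal (hessianDensity u 0 x)
  rw [ENNReal.ofReal_one, one_mul] at hrem
  rw [ENNReal.coe_mul, mul_assoc]
  refine hcov.trans (mul_le_mul_right ?_ _)
  calc _ ≤ X + (X + C₂ * H) := by gcongr
    _ ≤ (X + H) + ((X + H) + C₂ * (X + H)) := by
        gcongr
        exacts [le_self_add, le_self_add, le_add_self]
    _ = _ := by
        push_cast
        ring

lemma remainderDensity_zero {u : (Fin 2 → ℝ) → Fin m → ℝ} {x : Fin 2 → ℝ} (hu : SmoothNear u x) :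
    remainderDensity u 0 x = 0 := by
  simp [remainderDensity, covRemainder_zero hu]

lemma exists_lintegral_hessianDensity_le (m : ℕ) (hα : 0 ≤ α) (hβ : 0 < β) (hr : 0 < r) (l : ℕ) :
    ∃ C : ℝ≥0, ∀ u : (Fin 2 → ℝ) → Fin m → ℝ, C2BoundedOn α β u (Dr r) →
      ∫⁻ x in Dr r, ENNReal.ofReal (hessianDensity u l x) ≤
        C * ((∫⁻ x in Dr r, ENNReal.ofReal (covDensity u l x)) +
          ∫⁻ x in Dr r, ENNReal.ofReal (covDensity u 0 x)) := by
  obtain ⟨C₀, hC₀, hpt⟩ := exists_hessianDensity_le m hα 0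
  have hbase (u : (Fin 2 → ℝ) → Fin m → ℝ) (hu : C2BoundedOn α β u (Dr r)) :=
    setLIntegral_ofReal_le_mul (μ := volume) (g := covDensity u 0) (isOpen_Dr r).measurableSet
      hC₀.le fun x hx => (hpt u x (hu.smoothGradLE x hx)).trans_eq <| by
        rw [remainderDensity_zero (hu.smoothGradLE x hx).smooth, add_zero]
  cases l with
  | zero =>
    exact ⟨C₀.toNNReal, fun u hu => (hbase u hu).trans (mul_le_mul_right le_self_add _)⟩
  | succ n =>
    obtain ⟨C, hC⟩ := exists_lintegral_hessianDensity_succ_le m hα hβ hr n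
    refine ⟨C * (1 + C₀.toNNReal), fun u hu => (hC u hu).trans ?_⟩
    have hbase := hbase u hu
    set G := ∫⁻ x in Dr r, ENNReal.ofReal (covDensity u (n + 1) x)
    set G₀ := ∫⁻ x in Dr r, ENNReal.ofReal (covDensity u 0 x)
    rw [ENNReal.coe_mul, mul_assoc]
    refine mul_le_mul_right ?_ _
    calc _ ≤ (G + G₀) + ENNReal.ofReal C₀ * (G + G₀) :=
          add_le_add le_self_add (hbase.trans (mul_le_mul_right le_add_self _))
      _ = _ := by
          rw [ENNReal.coe_add, add_mul, ENNReal.coe_one, one_mul]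
          rfl

lemma C2BoundedOn.lintegral_hessianDensity_zero_ne_top {u : (Fin 2 → ℝ) → Fin m → ℝ}
    (hu : C2BoundedOn α β u (Dr r)) :
    ∫⁻ x in Dr r, ENNReal.ofReal (hessianDensity u 0 x) ≠ ⊤ :=
  (setLIntegral_lt_top_of_le_nnreal (isBounded_Dr r).measure_lt_top.ne
    ⟨(β ^ 2).toNNReal, fun x hx => ENNReal.ofReal_le_ofReal (hu.hessian_le x hx)⟩).ne

lemma C2BoundedOn.lintegral_covDensity_ne_top {u : (Fin 2 → ℝ) → Fin m → ℝ} (hα : 0 ≤ α)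
    (hβ : 0 < β) (hr : 0 < r) (hu : C2BoundedOn α β u (Dr r)) {l : ℕ}
    (hl : ∫⁻ x in Dr r, ENNReal.ofReal (hessianDensity u l x) ≠ ⊤) :
    ∫⁻ x in Dr r, ENNReal.ofReal (covDensity u l x) ≠ ⊤ := by
  cases l with
  | zero =>
    obtain ⟨C, hC, hpt⟩ := exists_covDensity_le m hα 0
    refine ne_top_of_le_ne_top (ENNReal.mul_ne_top ENNReal.ofReal_ne_top hl) <|
      setLIntegral_ofReal_le_mul (isOpen_Dr r).measurableSet hC.le fun x hx => ?_
    simpa only [remainderDensity_zero (hu.smoothGradLE x hx).smooth, add_zero] using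
      hpt u x (hu.smoothGradLE x hx)
  | succ n =>
    obtain ⟨C, hC⟩ := exists_lintegral_covDensity_succ_le m hα hβ hr n
    exact ne_top_of_le_ne_top (ENNReal.mul_ne_top ENNReal.coe_ne_top
      (ENNReal.add_ne_top.2 ⟨hl, hu.lintegral_hessianDensity_zero_ne_top⟩)) (hC u hu)

-- If `∇ˡA` fails to be square integrable, its Bochner integral is `0`; then `D^{l+2}u` is not
-- square integrable either and the left-hand side vanishes as well.
lemma exists_integral_hessianDensity_le (m : ℕ) (hα : 0 ≤ α) (hβ : 0 < β) (hr : 0 < r) (l : ℕ) :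
    ∃ C ≥ (0 : ℝ), ∀ u : (Fin 2 → ℝ) → Fin m → ℝ, C2BoundedOn α β u (Dr r) →
      ∫ x in Dr r, hessianDensity u l x ≤
        C * ((∫ x in Dr r, covDensity u l x) + ∫ x in Dr r, covDensity u 0 x) := by
  obtain ⟨C, hC⟩ := exists_lintegral_hessianDensity_le m hα hβ hr l
  refine ⟨C, C.2, fun u hu => ?_⟩
  have hmeas := (isOpen_Dr r).measurableSet
  have hsmooth (x) (hx : x ∈ Dr r) := (hu.smoothGradLE x hx).smooth
  have hcov (l : ℕ) : ∫ x in Dr r, covDensity u l x =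
      (∫⁻ x in Dr r, ENNReal.ofReal (covDensity u l x)).toReal :=
    integral_eq_lintegral_of_nonneg_ae
      ((ae_restrict_iff' hmeas).2 (ae_of_all _ fun x hx =>
        covDensity_nonneg (hsmooth x hx).differentiableAt l))
      ((continuousOn_covDensity hsmooth l).aestronglyMeasurable hmeas)
  rw [hcov, hcov, integral_eq_lintegral_of_nonneg_ae (ae_of_all _ (hessianDensity_nonneg u l))
    ((continuousOn_hessianDensity hsmooth l).aestronglyMeasurable hmeas)]
  by_cases htop : ∫⁻ x in Dr r, ENNReal.ofReal (hessianDensity u l x) = ⊤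
  · rw [htop, ENNReal.toReal_top]
    positivity
  have hG := hu.lintegral_covDensity_ne_top hα hβ hr htop
  have hG₀ := hu.lintegral_covDensity_ne_top hα hβ hr hu.lintegral_hessianDensity_zero_ne_top
  rw [← ENNReal.toReal_add hG hG₀, ← ENNReal.coe_toReal, ← ENNReal.toReal_mul]
  exact ENNReal.toReal_mono
    (ENNReal.mul_ne_top ENNReal.coe_ne_top (ENNReal.add_ne_top.2 ⟨hG, hG₀⟩)) (hC u hu)

lemma exists_Wnorm_le_mul_HAnorm (m : ℕ) (hα : 0 ≤ α) (hβ : 0 < β) (hr : 0 < r) (k : ℕ) :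
    ∃ C > (0 : ℝ), ∀ u : (Fin 2 → ℝ) → Fin m → ℝ, C2BoundedOn α β u (Dr r) →
      Wnorm r k u ≤ C * HAnorm r k u := by
  choose C hC hCu using exists_integral_hessianDensity_le m hα hβ hr
  set S := ∑ l ∈ Finset.range (k + 1), C l
  have hS : 0 ≤ S := Finset.sum_nonneg fun l _ => hC l
  refine ⟨√(2 * S) + 1, by positivity, fun u hu => ?_⟩
  have hcov_nonneg (l : ℕ) : 0 ≤ ∫ x in Dr r, covDensity u l x :=
    setIntegral_nonneg (isOpen_Dr r).measurableSet fun x hx =>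
      covDensity_nonneg (hu.smoothGradLE x hx).smooth.differentiableAt l
  have hcov_le {l : ℕ} (hl : l ∈ Finset.range (k + 1)) : ∫ x in Dr r, covDensity u l x ≤
      ∑ l ∈ Finset.range (k + 1), ∫ x in Dr r, covDensity u l x :=
    Finset.single_le_sum (f := fun l => ∫ x in Dr r, covDensity u l x)
      (fun l _ => hcov_nonneg l) hl
  have hsq : ∑ l ∈ Finset.range (k + 1), ∫ x in Dr r, hessianDensity u l x ≤
      2 * S * ∑ l ∈ Finset.range (k + 1), ∫ x in Dr r, covDensity u l x := by
    rw [mul_comm 2 S, mul_assoc, Finset.sum_mul]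
    refine Finset.sum_le_sum fun l hl => (hCu l u hu).trans ?_
    rw [two_mul]
    exact mul_le_mul_of_nonneg_left (add_le_add (hcov_le hl) (hcov_le (by simp))) (hC l)
  calc Wnorm r k u ≤ √(2 * S) * HAnorm r k u :=
        (Real.sqrt_le_sqrt hsq).trans_eq (Real.sqrt_mul (by positivity) _)
    _ ≤ _ := mul_le_mul_of_nonneg_right (le_add_of_nonneg_right zero_le_one) (Real.sqrt_nonneg _)

lemma C2BoundedOn.of_sum_sq_le {u : (Fin 2 → ℝ) → Fin m → ℝ} (hα : 0 ≤ α)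
    (hu : ContDiffOn ℝ ∞ u (Dr r))
    (hgrad : ∀ x ∈ Dr r, ∑ i, ∑ a, fderiv ℝ u x (Pi.single i 1) a ^ 2 ≤ α ^ 2)
    (hhess : ∀ x ∈ Dr r, hessianDensity u 0 x ≤ β ^ 2) : C2BoundedOn α β u (Dr r) := by
  refine ⟨fun x hx => ⟨smoothNear_of_contDiffOn hu hx, fun I a => ?_⟩, hhess⟩
  refine abs_le_of_sq_le_sq (le_trans ?_ (hgrad x hx)) hα
  have hinner := Finset.single_le_sum (f := fun a => fderiv ℝ u x (Pi.single (I 0) 1) a ^ 2)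
    (fun a _ => sq_nonneg _) (Finset.mem_univ a)
  exact hinner.trans <| Finset.single_le_sum
    (f := fun i => ∑ a, fderiv ℝ u x (Pi.single i 1) a ^ 2)
    (fun i _ => Finset.sum_nonneg fun a _ => sq_nonneg _) (Finset.mem_univ (I 0))

end SobolevComparison

end Stmt18

open Stmt18 MeasureTheory in
/-- Lemma 4.5: for a graph over the disk `D_r` with `|Du| ≤ α` and
`|D²u| ≤ β`: `‖D²u‖_{W^{k,2}} ≤ C Σ_{s=1}^{max(k,1)} ‖A‖^s_{H^{k,2}}` with
`C = C(r, α, β, k)`; in particular `‖D²u‖_{L²} ≤ C₀ ‖A‖_{L²}` for `k = 0`. -/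
theorem stmt_18 (m : ℕ) (r α β : ℝ) (hr : 0 < r) (hα : 0 < α) (hβ : 0 < β)
    (k : ℕ) :
    ∃ C > (0:ℝ), ∀ u : (Fin 2 → ℝ) → (Fin m → ℝ),
      ContDiffOn ℝ (⊤ : ℕ∞) u (Dr r) →
      (∀ x ∈ Dr r, ∑ i, ∑ a, (fderiv ℝ u x (Pi.single i 1) a) ^ 2 ≤ α ^ 2) →
      (∀ x ∈ Dr r, ∑ I : Fin 2 → Fin 2, ∑ a, (pdIter u 2 x I a) ^ 2 ≤ β ^ 2) →
      Wnorm r k u ≤ C * ∑ s ∈ Finset.Icc 1 (max k 1), HAnorm r k u ^ s := by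
  obtain ⟨C, hC, hle⟩ := exists_Wnorm_le_mul_HAnorm m hα.le hβ hr k
  refine ⟨C, hC, fun u hu hgrad hhess => ?_⟩
  have hpow (s : ℕ) : 0 ≤ HAnorm r k u ^ s := pow_nonneg (Real.sqrt_nonneg _) s
  calc Wnorm r k u ≤ C * HAnorm r k u ^ 1 := by
        rw [pow_one]
        exact hle u (.of_sum_sq_le hα.le hu hgrad hhess)
    _ ≤ C * ∑ s ∈ Finset.Icc 1 (max k 1), HAnorm r k u ^ s :=
        mul_le_mul_of_nonneg_left
          (Finset.single_le_sum (fun s _ => hpow s) (by simp)) hC.le
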